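/- arXiv:1507.04073 — 9 statements merged into one kernel-verified Lean document; each statement's English description precedes it below -/
import Mathlib

section
/- Let A = [a_1, ..., a_n] be an m×n real matrix and let ρ(A) := max_{z ∈ ℝ^m, ‖z‖₂=1} min_{i=1,...,n} ⟨a_i, z⟩. If ρ(A) > 0, then ρ(A) = min{‖y‖₂ : y ∈ conv{a_1,...,a_n}}. -/
open scoped RealInnerProductSpace BigOperators

/-- If ρ(A) := max_{‖z‖=1} min_i ⟪a_i, z⟫ is positive, then
ρ(A) = min {‖y‖ : y ∈ conv{a_1,…,a_n}}. -/
theorem stmt0 (m n : ℕ) (hn : 0 < n) (a : Fin n → EuclideanSpace ℝ (Fin m)) (ρ : ℝ)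
    (hρ : IsGreatest
      {t : ℝ | ∃ z : EuclideanSpace ℝ (Fin m), ‖z‖ = 1 ∧ t = ⨅ i : Fin n, ⟪a i, z⟫} ρ)
    (hρpos : 0 < ρ) :
    IsLeast {r : ℝ | ∃ y ∈ convexHull ℝ (Set.range a), r = ‖y‖} ρ := by
  haveI : Nonempty (Fin n) := ⟨⟨0, hn⟩⟩
  obtain ⟨⟨z, hz, hρz⟩, hub⟩ := hρ
  have hlow : ∀ y ∈ convexHull ℝ (Set.range a), ρ ≤ ‖y‖ := by
    intro y hy
    have hc : Convex ℝ {w : EuclideanSpace ℝ (Fin m) | ρ ≤ ⟪w, z⟫} := by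
      intro u hu v hv s t hs ht hst
      simp only [Set.mem_setOf_eq] at hu hv ⊢
      rw [inner_add_left, real_inner_smul_left, real_inner_smul_left]
      have h1 := mul_le_mul_of_nonneg_left hu hs
      have h2 := mul_le_mul_of_nonneg_left hv ht
      have h3 : s * ρ + t * ρ = ρ := by rw [← add_mul, hst, one_mul]
      linarith
    have hsub : Set.range a ⊆ {w : EuclideanSpace ℝ (Fin m) | ρ ≤ ⟪w, z⟫} := by
      rintro _ ⟨i, rfl⟩
      simp only [Set.mem_setOf_eq]
      rw [hρz]
      exact ciInf_le (Set.finite_range _).bddBelow i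
    have h1 : ρ ≤ ⟪y, z⟫ := convexHull_min hsub hc hy
    have h2 := real_inner_le_norm y z
    rw [hz, mul_one] at h2
    exact h1.trans h2
  have hK : IsCompact (convexHull ℝ (Set.range a)) :=
    (Set.finite_range a).isCompact_convexHull ℝ
  have hne : (convexHull ℝ (Set.range a)).Nonempty := (Set.range_nonempty a).convexHull
  obtain ⟨v, hv, hvmin⟩ := exists_norm_eq_iInf_of_complete_convex hne hK.isComplete
    (convex_convexHull ℝ _) 0
  rw [norm_eq_iInf_iff_real_inner_le_zero (convex_convexHull ℝ _) hv] at hvmin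
  have hvρ := hlow v hv
  have hvpos : 0 < ‖v‖ := lt_of_lt_of_le hρpos hvρ
  have hle : ‖v‖ ≤ ρ := by
    have h1 : (⨅ i : Fin n, ⟪a i, ‖v‖⁻¹ • v⟫) ≤ ρ := by
      refine hub ⟨‖v‖⁻¹ • v, ?_, rfl⟩
      rw [norm_smul, norm_inv, norm_norm, inv_mul_cancel₀ hvpos.ne']
    refine le_trans (le_ciInf fun i => ?_) h1
    have h2 := hvmin (a i) (subset_convexHull ℝ _ ⟨i, rfl⟩)
    rw [zero_sub, inner_neg_left, inner_sub_right, real_inner_self_eq_norm_sq,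
      real_inner_comm] at h2
    rw [real_inner_smul_right, inv_mul_eq_div, le_div_iff₀ hvpos]
    nlinarith
  refine ⟨⟨v, hv, le_antisymm hvρ hle⟩, ?_⟩
  rintro r ⟨y, hy, rfl⟩
  exact hlow y hy
end

section
/- Let A = [a_1, ..., a_n] be an m×n real matrix and let ρ(A) := max_{z ∈ ℝ^m, ‖z‖₂=1} min_{i=1,...,n} ⟨a_i, z⟩. If ρ(A) ≤ 0, then |ρ(A)| = max{r ≥ 0 : every y ∈ ℝ^m with ‖y‖₂ ≤ r belongs to conv{a_1,...,a_n}}. -/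
open scoped RealInnerProductSpace BigOperators

/-- If ρ(A) := max_{‖z‖=1} min_i ⟪a_i, z⟫ is nonpositive, then
|ρ(A)| = max {r ≥ 0 : every y with ‖y‖ ≤ r belongs to conv{a_1,…,a_n}}. -/
theorem stmt1 (m n : ℕ) (hn : 0 < n) (a : Fin n → EuclideanSpace ℝ (Fin m)) (ρ : ℝ)
    (hρ : IsGreatest
      {t : ℝ | ∃ z : EuclideanSpace ℝ (Fin m), ‖z‖ = 1 ∧ t = ⨅ i : Fin n, ⟪a i, z⟫} ρ)
    (hρle : ρ ≤ 0) :
    IsGreatest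
      {r : ℝ | 0 ≤ r ∧ ∀ y : EuclideanSpace ℝ (Fin m), ‖y‖ ≤ r →
        y ∈ convexHull ℝ (Set.range a)} |ρ| := by
  haveI : Nonempty (Fin n) := ⟨⟨0, hn⟩⟩
  rw [abs_of_nonpos hρle]
  obtain ⟨⟨z, hz, hρz⟩, hmax⟩ := hρ
  refine ⟨⟨by linarith, ?_⟩, ?_⟩
  · intro y hy
    by_contra hmem
    have hcl : IsClosed (convexHull ℝ (Set.range a)) :=
      (Set.finite_range a).isCompact_convexHull ℝ |>.isClosed
    obtain ⟨f, u, hfu, hb⟩ :=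
      geometric_hahn_banach_point_closed (convex_convexHull ℝ (Set.range a)) hcl hmem
    obtain ⟨w, rfl⟩ := (InnerProductSpace.toDual ℝ (EuclideanSpace ℝ (Fin m))).surjective f
    simp only [InnerProductSpace.toDual_apply_apply] at hfu hb
    have hba : ∀ i, u < ⟪w, a i⟫ := fun i => hb _ (subset_convexHull ℝ _ ⟨i, rfl⟩)
    have hw : w ≠ 0 := by
      rintro rfl
      have := hba ⟨0, hn⟩
      simp only [inner_zero_left] at this hfu
      linarith
    have hwn : 0 < ‖w‖ := norm_pos_iff.mpr hw
    have hle := hmax ⟨‖w‖⁻¹ • w, by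
      rw [norm_smul, norm_inv, norm_norm, inv_mul_cancel₀ hwn.ne'], rfl⟩
    obtain ⟨i, hi⟩ := exists_eq_ciInf_of_finite (f := fun i : Fin n => ⟪a i, ‖w‖⁻¹ • w⟫)
    rw [← hi, real_inner_smul_right, real_inner_comm, inv_mul_le_iff₀ hwn] at hle
    have h1 := hba i
    have h2 := neg_le_of_abs_le (abs_real_inner_le_norm w y)
    have h3 : ‖w‖ * ‖y‖ ≤ ‖w‖ * (-ρ) := mul_le_mul_of_nonneg_left hy hwn.le
    linarith
  · rintro r ⟨hr, h⟩
    have hy := h (-(r • z)) (by rw [norm_neg, norm_smul, hz, Real.norm_of_nonneg hr, mul_one])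
    have hconv : Convex ℝ {x : EuclideanSpace ℝ (Fin m) | ρ ≤ ⟪z, x⟫} :=
      convex_halfSpace_ge (innerₛₗ ℝ z).isLinear ρ
    have hsub : convexHull ℝ (Set.range a) ⊆ {x | ρ ≤ ⟪z, x⟫} := by
      refine convexHull_min ?_ hconv
      rintro _ ⟨i, rfl⟩
      rw [Set.mem_setOf_eq, hρz, real_inner_comm]
      exact ciInf_le (Set.finite_range _).bddBelow i
    have := hsub hy
    rw [Set.mem_setOf_eq, inner_neg_right, real_inner_smul_right, real_inner_self_eq_norm_sq, hz] at this
    linarith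
end

section
/- Let A = [a_1, ..., a_n] be an m×n real matrix and let ρ(A) := max_{z ∈ ℝ^m, ‖z‖₂=1} min_{i=1,...,n} ⟨a_i, z⟩. Then ρ(A) > 0 if and only if 0 ∉ conv{a_1,...,a_n}, and ρ(A) < 0 if and only if 0 lies in the interior of conv{a_1,...,a_n}. Moreover, |ρ(A)| equals the Euclidean distance from the origin to the topological boundary of conv{a_1,...,a_n}. -/
open scoped RealInnerProductSpace BigOperators

/-- ρ(A) > 0 iff 0 ∉ conv(A); ρ(A) < 0 iff 0 ∈ int(conv(A));
and |ρ(A)| is the distance from the origin to the boundary of conv(A). -/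
theorem stmt2 (m n : ℕ) (hn : 0 < n) (a : Fin n → EuclideanSpace ℝ (Fin m)) (ρ : ℝ)
    (hρ : IsGreatest
      {t : ℝ | ∃ z : EuclideanSpace ℝ (Fin m), ‖z‖ = 1 ∧ t = ⨅ i : Fin n, ⟪a i, z⟫} ρ) :
    (0 < ρ ↔ (0 : EuclideanSpace ℝ (Fin m)) ∉ convexHull ℝ (Set.range a)) ∧
    (ρ < 0 ↔ (0 : EuclideanSpace ℝ (Fin m)) ∈ interior (convexHull ℝ (Set.range a))) ∧
    |ρ| = Metric.infDist (0 : EuclideanSpace ℝ (Fin m))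
            (frontier (convexHull ℝ (Set.range a))) := by
  obtain ⟨⟨z0, hz0, hρz⟩, hub⟩ := hρ
  haveI : Nonempty (Fin n) := ⟨⟨0, hn⟩⟩
  set K := convexHull ℝ (Set.range a) with hK
  have hKc : Convex ℝ K := convex_convexHull ℝ _
  have hKcomp : IsCompact K := (Set.finite_range a).isCompact_convexHull ℝ
  have haK : ∀ i, a i ∈ K := fun i => subset_convexHull ℝ _ (Set.mem_range_self i)
  have hKne : K.Nonempty := ⟨_, haK ⟨0, hn⟩⟩
  have hz00 : ⟪z0, z0⟫ = 1 := by rw [real_inner_self_eq_norm_sq, hz0]; norm_num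
  have h1 : ∀ x ∈ K, ρ ≤ ⟪x, z0⟫ := by
    intro x hx
    have hsub : K ⊆ {x | ρ ≤ ⟪x, z0⟫} := by
      apply convexHull_min
      · rintro _ ⟨i, rfl⟩
        rw [Set.mem_setOf_eq, hρz]
        exact ciInf_le (Set.finite_range _).bddBelow i
      · apply convex_halfSpace_ge
        exact ⟨fun x y => inner_add_left _ _ _, fun c x => real_inner_smul_left _ _ _⟩
    exact hsub hx
  have h2 : ∀ z : EuclideanSpace ℝ (Fin m), ‖z‖ = 1 → ∃ x ∈ K, ⟪x, z⟫ ≤ ρ := by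
    intro z hz
    obtain ⟨i, hi⟩ := exists_eq_ciInf_of_finite (f := fun i : Fin n => ⟪a i, z⟫)
    refine ⟨a i, haK i, ?_⟩
    have := hub ⟨z, hz, rfl⟩
    rw [hi]; exact this
  have h3 : ∀ y, y ∉ K → ∃ p ∈ K, ∃ z : EuclideanSpace ℝ (Fin m), ‖z‖ = 1 ∧ 0 < ‖p - y‖ ∧
      ⟪y, z⟫ + ‖p - y‖ ≤ ρ := by
    intro y hy
    obtain ⟨p, hp, hpm⟩ := exists_norm_eq_iInf_of_complete_convex hKne hKcomp.isComplete hKc y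
    have hv := (norm_eq_iInf_iff_real_inner_le_zero hKc hp).1 hpm
    have hne : p - y ≠ 0 := by
      intro h
      exact hy (sub_eq_zero.1 h ▸ hp)
    have hpos : 0 < ‖p - y‖ := norm_pos_iff.2 hne
    have hz : ‖(‖p - y‖⁻¹) • (p - y)‖ = 1 := by
      rw [norm_smul, norm_inv, norm_norm, inv_mul_cancel₀ hpos.ne']
    refine ⟨p, hp, _, hz, hpos, ?_⟩
    obtain ⟨x, hx, hxρ⟩ := h2 _ hz
    refine le_trans ?_ hxρ
    have h := hv x hx
    rw [← sub_nonneg, real_inner_smul_right, real_inner_smul_right]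
    have e : ⟪x, p - y⟫ - ⟪y, p - y⟫ = ‖p - y‖ ^ 2 - ⟪y - p, x - p⟫ := by
      rw [← real_inner_self_eq_norm_sq]
      simp only [inner_sub_left, inner_sub_right, real_inner_comm]
      rw [real_inner_comm x p, real_inner_comm x y, real_inner_comm p y]
      ring
    have e2 : ‖p - y‖⁻¹ * ⟪x, p - y⟫ - (‖p - y‖⁻¹ * ⟪y, p - y⟫ + ‖p - y‖)
        = ‖p - y‖⁻¹ * (- ⟪y - p, x - p⟫) := by
      have : ‖p - y‖⁻¹ * ⟪x, p - y⟫ - (‖p - y‖⁻¹ * ⟪y, p - y⟫ + ‖p - y‖)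
        = ‖p - y‖⁻¹ * (⟪x, p - y⟫ - ⟪y, p - y⟫) - ‖p - y‖ := by ring
      rw [this, e]
      field_simp
      ring
    rw [e2]
    exact mul_nonneg (inv_nonneg.2 hpos.le) (by linarith)
  have h4 : ∀ y, ‖y‖ ≤ -ρ → y ∈ K := by
    intro y hy
    by_contra hyK
    obtain ⟨p, hp, z, hz, hpos, h⟩ := h3 y hyK
    have := abs_real_inner_le_norm y z
    rw [hz, mul_one] at this
    have := (abs_le.1 this).1
    linarith
  have h5 : ∀ x ∈ interior K, ρ < ⟪x, z0⟫ := by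
    intro x hx
    obtain ⟨ε, hε, hb⟩ := Metric.isOpen_iff.1 isOpen_interior x hx
    have hm : x - (ε / 2) • z0 ∈ K := by
      apply interior_subset
      apply hb
      rw [Metric.mem_ball, dist_eq_norm, sub_sub_cancel_left, norm_neg, norm_smul, hz0,
        Real.norm_of_nonneg (by positivity)]
      linarith
    have := h1 _ hm
    rw [inner_sub_left, real_inner_smul_left, hz00] at this
    linarith
  have h6 : ∀ x ∈ K, ⟪x, z0⟫ ≤ ρ → x ∈ frontier K := by
    intro x hx hxρ
    rw [hKcomp.isClosed.frontier_eq]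
    exact ⟨hx, fun h => absurd (h5 x h) (not_lt.2 hxρ)⟩
  have h7 : Metric.ball 0 (-ρ) ⊆ interior K := by
    apply interior_maximal _ Metric.isOpen_ball
    intro y hy
    exact h4 y (mem_ball_zero_iff.1 hy).le
  have hA : 0 < ρ ↔ (0 : EuclideanSpace ℝ (Fin m)) ∉ K := by
    constructor
    · intro h h0
      have := h1 0 h0
      rw [inner_zero_left] at this
      linarith
    · intro h
      obtain ⟨p, hp, z, hz, hpos, h⟩ := h3 0 h
      rw [inner_zero_left] at h
      linarith
  refine ⟨hA, ?_, ?_⟩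
  · constructor
    · intro h
      exact h7 (Metric.mem_ball_self (by linarith))
    · intro h
      simpa using h5 0 h
  · have main : ∃ p ∈ frontier K, ‖p‖ ≤ |ρ| ∧ ∀ y ∈ frontier K, |ρ| ≤ ‖y‖ := by
      have hfr : frontier K ⊆ K := hKcomp.isClosed.frontier_subset
      rcases lt_or_ge 0 ρ with hpos | hneg
      · obtain ⟨p, hp, z, hz, hpp, h⟩ := h3 0 (hA.1 hpos)
        rw [inner_zero_left, sub_zero, zero_add] at h
        rw [abs_of_pos hpos]
        refine ⟨p, h6 p hp ?_, h, fun y hy => ?_⟩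
        · have := real_inner_le_norm p z0
          rw [hz0, mul_one] at this
          linarith
        · have := real_inner_le_norm y z0
          rw [hz0, mul_one] at this
          linarith [h1 y (hfr hy)]
      · rw [abs_of_nonpos hneg]
        have hnorm : ‖ρ • z0‖ = -ρ := by
          rw [norm_smul, hz0, mul_one, Real.norm_eq_abs, abs_of_nonpos hneg]
        refine ⟨ρ • z0, h6 _ (h4 _ hnorm.le) ?_, hnorm.le, fun y hy => ?_⟩
        · rw [real_inner_smul_left, hz00, mul_one]
        · by_contra hlt
          exact hy.2 (h7 (mem_ball_zero_iff.2 (not_le.1 hlt)))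
    obtain ⟨p, hp, hle, hall⟩ := main
    apply le_antisymm
    · rw [Metric.le_infDist ⟨p, hp⟩]
      intro y hy
      rw [dist_zero_left]
      exact hall y hy
    · refine (Metric.infDist_le_dist_of_mem hp).trans ?_
      rwa [dist_zero_left]
end

section
/- Let A = [a_1, ..., a_n] be an m×n real matrix with ‖a_i‖₂ = 1 for i = 1,...,n, such that 0 ∈ conv{a_1,...,a_n}. Then w(A) ≥ |ρ(A)|, where w(A) is the relative width and ρ(A) := max_{z ∈ ℝ^m, ‖z‖₂=1} min_{i=1,...,n} ⟨a_i, z⟩. -/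
open scoped RealInnerProductSpace BigOperators

/-- `comb a x = A x`, the combination `∑ i, x i • a i` of the columns `a i` of `A`. -/
noncomputable def comb {m n : ℕ} (a : Fin n → EuclideanSpace ℝ (Fin m)) (x : Fin n → ℝ) :
    EuclideanSpace ℝ (Fin m) := ∑ i, x i • a i

/-- The relative width
`w(A) = min_{x ≥ 0, Ax ≠ 0} max {⟪Ax, a ℓ - a j⟫ / ‖Ax‖ : ℓ ∈ S(x), j ∈ {1,…,n}}`. -/
noncomputable def relWidth {m n : ℕ} (a : Fin n → EuclideanSpace ℝ (Fin m)) : ℝ :=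
  sInf {t : ℝ | ∃ x : Fin n → ℝ, (∀ i, 0 ≤ x i) ∧ comb a x ≠ 0 ∧
    t = sSup {s : ℝ | ∃ ℓ j : Fin n, 0 < x ℓ ∧
      s = ⟪comb a x, a ℓ - a j⟫ / ‖comb a x‖}}

/-- for a matrix with unit columns such that `0 ∈ conv(A)`,
the relative width satisfies `w(A) ≥ |ρ(A)|`. -/
theorem stmt3 (m n : ℕ) (hn : 0 < n) (a : Fin n → EuclideanSpace ℝ (Fin m))
    (hnorm : ∀ i, ‖a i‖ = 1)
    (h0 : (0 : EuclideanSpace ℝ (Fin m)) ∈ convexHull ℝ (Set.range a)) (ρ : ℝ)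
    (hρ : IsGreatest
      {t : ℝ | ∃ z : EuclideanSpace ℝ (Fin m), ‖z‖ = 1 ∧ t = ⨅ i : Fin n, ⟪a i, z⟫} ρ) :
    |ρ| ≤ relWidth a := by
  haveI : Nonempty (Fin n) := ⟨⟨0, hn⟩⟩
  have hbdd : ∀ z : EuclideanSpace ℝ (Fin m), BddBelow (Set.range fun i : Fin n => ⟪a i, z⟫) :=
    fun z => (Set.finite_range _).bddBelow
  have hρ0 : ρ ≤ 0 := by
    obtain ⟨z, hz, hρz⟩ := hρ.1
    have hconv : Convex ℝ {y : EuclideanSpace ℝ (Fin m) | ρ ≤ ⟪z, y⟫} :=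
      convex_halfSpace_ge (innerₗ _ z).isLinear ρ
    have hsub : Set.range a ⊆ {y : EuclideanSpace ℝ (Fin m) | ρ ≤ ⟪z, y⟫} := by
      rintro _ ⟨i, rfl⟩
      have := ciInf_le (hbdd z) i
      simp only [Set.mem_setOf_eq]
      rw [real_inner_comm, hρz]
      exact this
    have := convexHull_min hsub hconv h0
    simpa using this
  rw [abs_of_nonpos hρ0]
  unfold relWidth
  apply le_csInf
  · refine ⟨_, Pi.single ⟨0, hn⟩ 1, ?_, ?_, rfl⟩
    · intro i
      by_cases h : i = ⟨0, hn⟩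
      · subst h; simp
      · simp [Pi.single_eq_of_ne h]
    · have : comb a (Pi.single ⟨0, hn⟩ 1) = a ⟨0, hn⟩ := by
        simp [comb, Pi.single_apply]
      rw [this]
      intro h
      have h1 := hnorm ⟨0, hn⟩
      rw [h] at h1
      simp at h1
  · rintro t ⟨x, hx, hne, rfl⟩
    set u := comb a x with hu
    have hpos : 0 < ‖u‖ := norm_pos_iff.mpr hne
    obtain ⟨l, hl, hl2⟩ : ∃ l, 0 < x l ∧ 0 ≤ ⟪u, a l⟫ := by
      by_contra! hcon
      have h1 : ⟪u, u⟫ = ∑ i, x i * ⟪u, a i⟫ := by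
        have h3 : ⟪u, u⟫ = ⟪u, ∑ i, x i • a i⟫ := rfl
        rw [h3, inner_sum]
        simp only [inner_smul_right]
      have h2 : ∑ i, x i * ⟪u, a i⟫ ≤ 0 := by
        apply Finset.sum_nonpos
        intro i _
        rcases (hx i).eq_or_lt with h | h
        · simp [← h]
        · exact mul_nonpos_of_nonneg_of_nonpos (hx i) (hcon i h).le
      rw [real_inner_self_eq_norm_sq] at h1
      nlinarith
    obtain ⟨j, hj⟩ := exists_eq_ciInf_of_finite (f := fun i : Fin n => ⟪a i, ‖u‖⁻¹ • u⟫)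
    have hj2 : ⟪a j, ‖u‖⁻¹ • u⟫ ≤ ρ := by
      apply hρ.2
      refine ⟨‖u‖⁻¹ • u, ?_, hj⟩
      rw [norm_smul, norm_inv, norm_norm, inv_mul_cancel₀ hpos.ne']
    rw [inner_smul_right, real_inner_comm, inv_mul_eq_div] at hj2
    have hle : -ρ ≤ ⟪u, a l - a j⟫ / ‖u‖ := by
      rw [inner_sub_right, sub_div]
      have := div_nonneg hl2 hpos.le
      linarith
    refine hle.trans (le_csSup ?_ ⟨l, j, hl, rfl⟩)
    apply Set.Finite.bddAbove
    apply (Set.finite_range (fun p : Fin n × Fin n => ⟪u, a p.1 - a p.2⟫ / ‖u‖)).subset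
    rintro s ⟨l, j, _, rfl⟩
    exact ⟨(l, j), rfl⟩
end

section
/- Let A = [a_1, ..., a_n] ∈ ℝ^{m×n} with ‖a_i‖₂ = 1 for all i, and suppose 0 ∈ conv{a_1,...,a_n}. Consider the von Neumann algorithm with away steps: sequences x_k ∈ Δ_{n−1}, y_k = A x_k, where x_0 is a vertex of Δ_{n−1}, and for each k: j minimizes ⟨a_i, y_k⟩ over i ∈ {1,...,n}, ℓ maximizes ⟨a_i, y_k⟩ over i ∈ S(x_k); if ⟨a_j − y_k, y_k⟩ < ⟨y_k − a_ℓ, y_k⟩ set a := a_j − y_k, u := e_j − x_k, θ_max := 1 (regular step), otherwise set a := y_k − a_ℓ, u := x_k − e_ℓ, θ_max := (x_k)_ℓ/(1 − (x_k)_ℓ) (away step); θ_k minimizes ‖y_k + θ a‖₂ over θ ∈ [0, θ_max]; and x_{k+1} := x_k + θ_k u. Then for all k ≥ 1, ‖y_k‖₂² ≤ (1 − w(A)²/16)^{k/2} ‖y_0‖₂². -/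
open scoped RealInnerProductSpace BigOperators

/-- One iteration of the von Neumann algorithm with away steps, mapping `x k` to `x (k+1)`:
`j` minimizes `⟪a i, y k⟫`, `ℓ` maximizes `⟪a i, y k⟫` over the support of `x k`; a regular
step (`d = a j - y k`, `u = e j - x k`, `θmax = 1`) is taken when
`⟪a j - y k, y k⟫ < ⟪y k - a ℓ, y k⟫`, otherwise an away step
(`d = y k - a ℓ`, `u = x k - e ℓ`, `θmax = (x k) ℓ / (1 - (x k) ℓ)`);
`θ` minimizes `‖y k + θ • d‖` over `[0, θmax]` and `x (k+1) = x k + θ • u`. -/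
def VNAwayStep {m n : ℕ} (a : Fin n → EuclideanSpace ℝ (Fin m))
    (x x' : Fin n → ℝ) (y : EuclideanSpace ℝ (Fin m)) : Prop :=
  ∃ (j ℓ : Fin n) (d : EuclideanSpace ℝ (Fin m)) (u : Fin n → ℝ) (θmax θ : ℝ),
    (∀ i, ⟪a j, y⟫ ≤ ⟪a i, y⟫) ∧
    0 < x ℓ ∧ (∀ i, 0 < x i → ⟪a i, y⟫ ≤ ⟪a ℓ, y⟫) ∧
    ((⟪a j - y, y⟫ < ⟪y - a ℓ, y⟫ ∧
        d = a j - y ∧ u = Pi.single j 1 - x ∧ θmax = 1) ∨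
     (¬ (⟪a j - y, y⟫ < ⟪y - a ℓ, y⟫) ∧
        d = y - a ℓ ∧ u = x - Pi.single ℓ 1 ∧ θmax = x ℓ / (1 - x ℓ))) ∧
    0 ≤ θ ∧ θ ≤ θmax ∧
    (∀ θ' : ℝ, 0 ≤ θ' → θ' ≤ θmax → ‖y + θ • d‖ ≤ ‖y + θ' • d‖) ∧
    x' = x + θ • u

lemma comb_add_smul {m n : ℕ} (a : Fin n → EuclideanSpace ℝ (Fin m)) (x u : Fin n → ℝ) (t : ℝ) :
    comb a (x + t • u) = comb a x + t • comb a u := by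
  simp [comb, add_smul, Finset.sum_add_distrib, Finset.smul_sum, mul_smul]

lemma comb_sub {m n : ℕ} (a : Fin n → EuclideanSpace ℝ (Fin m)) (x u : Fin n → ℝ) :
    comb a (x - u) = comb a x - comb a u := by
  simp [comb, sub_smul, Finset.sum_sub_distrib]

lemma comb_single {m n : ℕ} (a : Fin n → EuclideanSpace ℝ (Fin m)) (i : Fin n) :
    comb a (Pi.single i 1) = a i := by
  unfold comb
  rw [Finset.sum_eq_single i]
  · simp
  · intro b _ hb
    simp [hb]
  · simp

lemma comb_norm_le {m n : ℕ} (a : Fin n → EuclideanSpace ℝ (Fin m))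
    (hnorm : ∀ i, ‖a i‖ = 1) (x : Fin n → ℝ) (hx : ∀ i, 0 ≤ x i) (hs : ∑ i, x i = 1) :
    ‖comb a x‖ ≤ 1 := by
  unfold comb
  calc _ ≤ ∑ i, ‖x i • a i‖ := norm_sum_le _ _
    _ = ∑ i, x i := by
      refine Finset.sum_congr rfl fun i _ => ?_
      rw [norm_smul, hnorm, mul_one, Real.norm_of_nonneg (hx i)]
    _ ≤ 1 := hs.le

lemma inner_sub_le_two {m n : ℕ} (a : Fin n → EuclideanSpace ℝ (Fin m))
    (hnorm : ∀ i, ‖a i‖ = 1) (v : EuclideanSpace ℝ (Fin m)) (i j : Fin n) :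
    ⟪v, a i - a j⟫ ≤ 2 * ‖v‖ := by
  have h1 := real_inner_le_norm v (a i - a j)
  have h2 := norm_sub_le (a i) (a j)
  rw [hnorm, hnorm] at h2
  nlinarith [norm_nonneg v]

lemma bdd_inner {m n : ℕ} (a : Fin n → EuclideanSpace ℝ (Fin m))
    (hnorm : ∀ i, ‖a i‖ = 1) (x : Fin n → ℝ) (hc : comb a x ≠ 0) :
    BddAbove {s : ℝ | ∃ ℓ j : Fin n, 0 < x ℓ ∧
      s = ⟪comb a x, a ℓ - a j⟫ / ‖comb a x‖} := by
  refine ⟨2, ?_⟩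
  rintro s ⟨l, j, _, rfl⟩
  rw [div_le_iff₀ (norm_pos_iff.2 hc)]
  exact inner_sub_le_two a hnorm _ _ _

lemma sup_nonneg {m n : ℕ} (a : Fin n → EuclideanSpace ℝ (Fin m))
    (hnorm : ∀ i, ‖a i‖ = 1) (x : Fin n → ℝ) (hx : ∀ i, 0 ≤ x i) (hc : comb a x ≠ 0) :
    0 ≤ sSup {s : ℝ | ∃ ℓ j : Fin n, 0 < x ℓ ∧
      s = ⟪comb a x, a ℓ - a j⟫ / ‖comb a x‖} := by
  have : ∃ l, 0 < x l := by
    by_contra! h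
    apply hc
    unfold comb
    refine Finset.sum_eq_zero fun i _ => ?_
    rw [le_antisymm (h i) (hx i), zero_smul]
  obtain ⟨l, hl⟩ := this
  exact le_csSup (bdd_inner a hnorm x hc) ⟨l, l, hl, by simp⟩

lemma relWidth_nonneg {m n : ℕ} (a : Fin n → EuclideanSpace ℝ (Fin m))
    (hnorm : ∀ i, ‖a i‖ = 1) : 0 ≤ relWidth a := by
  apply Real.sInf_nonneg
  rintro t ⟨x, hx, hc, rfl⟩
  exact sup_nonneg a hnorm x hx hc

lemma relWidth_mul_le {m n : ℕ} (a : Fin n → EuclideanSpace ℝ (Fin m))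
    (hnorm : ∀ i, ‖a i‖ = 1) (x : Fin n → ℝ) (hx : ∀ i, 0 ≤ x i)
    (j l : Fin n) (hj : ∀ i, ⟪a j, comb a x⟫ ≤ ⟪a i, comb a x⟫)
    (hl0 : 0 < x l) (hl : ∀ i, 0 < x i → ⟪a i, comb a x⟫ ≤ ⟪a l, comb a x⟫) :
    relWidth a * ‖comb a x‖ ≤ ⟪comb a x, a l - a j⟫ := by
  by_cases hc : comb a x = 0
  · simp [hc]
  have hp := norm_pos_iff.2 hc
  rw [← le_div_iff₀ hp]
  have h1 : relWidth a ≤ sSup {s : ℝ | ∃ ℓ j : Fin n, 0 < x ℓ ∧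
      s = ⟪comb a x, a ℓ - a j⟫ / ‖comb a x‖} := by
    apply csInf_le
    · refine ⟨0, ?_⟩
      rintro t ⟨x, hx, hc, rfl⟩
      exact sup_nonneg a hnorm x hx hc
    · exact ⟨x, hx, hc, rfl⟩
  refine h1.trans (csSup_le ⟨_, l, j, hl0, rfl⟩ ?_)
  rintro s ⟨l', j', hl', rfl⟩
  apply div_le_div_of_nonneg_right _ hp.le
  rw [inner_sub_right, inner_sub_right, real_inner_comm, real_inner_comm (a j'),
    real_inner_comm (a l), real_inner_comm (a j)]
  linarith [hl l' hl', hj j']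

lemma step_main {m n : ℕ} (a : Fin n → EuclideanSpace ℝ (Fin m))
    (hnorm : ∀ i, ‖a i‖ = 1) (x x' : Fin n → ℝ) (hx : ∀ i, 0 ≤ x i) (hs : ∑ i, x i = 1)
    (h : VNAwayStep a x x' (comb a x)) :
    (∀ i, 0 ≤ x' i) ∧ ∑ i, x' i = 1 ∧
    ((‖comb a x'‖ ^ 2 ≤ (1 - relWidth a ^ 2 / 16) * ‖comb a x‖ ^ 2 ∧
      (Finset.univ.filter fun i => 0 < x' i).card
        ≤ (Finset.univ.filter fun i => 0 < x i).card + 1) ∨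
     (‖comb a x'‖ ^ 2 ≤ ‖comb a x‖ ^ 2 ∧
      (Finset.univ.filter fun i => 0 < x' i).card + 1
        ≤ (Finset.univ.filter fun i => 0 < x i).card)) := by
  obtain ⟨j, l, d, u, T, θ, hj, hl0, hl, hcase, hθ0, hθT, hmin, rfl⟩ := h
  have hg := relWidth_mul_le a hnorm x hx j l hj hl0 hl
  have hw := relWidth_nonneg a hnorm
  have hy1 := comb_norm_le a hnorm x hx hs
  have hg2 := inner_sub_le_two a hnorm (comb a x) l j
  have hxl : x l ≤ 1 := by
    rw [← hs]
    exact Finset.single_le_sum (fun i _ => hx i) (Finset.mem_univ l)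
  have hwy := mul_nonneg hw (norm_nonneg (comb a x))
  obtain ⟨g, hgdef⟩ : ∃ g, g = ⟪comb a x, a l - a j⟫ := ⟨_, rfl⟩
  rw [← hgdef] at hg hg2
  have hsq : (relWidth a * ‖comb a x‖) ^ 2 ≤ g ^ 2 := pow_le_pow_left₀ hwy hg 2
  have hgd : ⟪a j - comb a x, comb a x⟫ + ⟪comb a x - a l, comb a x⟫ = - g := by
    rw [hgdef, inner_sub_right, inner_sub_left, inner_sub_left, real_inner_comm (a l),
      real_inner_comm (a j)]
    ring
  have hu : comb a u = d := by
    rcases hcase with ⟨_, rfl, rfl, _⟩ | ⟨_, rfl, rfl, _⟩ <;> rw [comb_sub, comb_single]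
  have hd : ⟪d, comb a x⟫ ≤ - g / 2 := by
    rcases hcase with ⟨h, rfl, _, _⟩ | ⟨h, rfl, _, _⟩ <;> linarith
  have hd2 : ‖d‖ ≤ 2 := by
    rcases hcase with ⟨h, rfl, _, _⟩ | ⟨h, rfl, _, _⟩
    · have := norm_sub_le (a j) (comb a x)
      rw [hnorm] at this; linarith
    · have := norm_sub_le (comb a x) (a l)
      rw [hnorm] at this; linarith
  have hD : ‖d‖ ^ 2 ≤ 4 := by nlinarith [norm_nonneg d]
  have hT0 : 0 ≤ T := hθ0.trans hθT
  have hexp : ∀ t : ℝ, ‖comb a x + t • d‖ ^ 2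
      = ‖comb a x‖ ^ 2 + 2 * t * ⟪d, comb a x⟫ + t ^ 2 * ‖d‖ ^ 2 := by
    intro t
    rw [norm_add_sq_real, inner_smul_right, norm_smul, mul_pow, Real.norm_eq_abs, sq_abs,
      real_inner_comm]
    ring
  have hmin2 : ∀ t, 0 ≤ t → t ≤ T → ‖comb a x + θ • d‖ ^ 2 ≤ ‖comb a x + t • d‖ ^ 2 :=
    fun t h1 h2 => pow_le_pow_left₀ (norm_nonneg _) (hmin t h1 h2) 2
  have hgood : g / 8 ≤ T →
      ‖comb a x + θ • d‖ ^ 2 ≤ (1 - relWidth a ^ 2 / 16) * ‖comb a x‖ ^ 2 := by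
    intro hT
    have h1 := hmin2 (g / 8) (by linarith) hT
    rw [hexp (g / 8)] at h1
    have h2 : 2 * (g / 8) * ⟪d, comb a x⟫ ≤ 2 * (g / 8) * (- g / 2) :=
      mul_le_mul_of_nonneg_left hd (by linarith)
    have h3 : (g / 8) ^ 2 * ‖d‖ ^ 2 ≤ (g / 8) ^ 2 * 4 :=
      mul_le_mul_of_nonneg_left hD (sq_nonneg _)
    nlinarith
  rw [comb_add_smul, hu]
  rcases hcase with ⟨h, hdd, rfl, rfl⟩ | ⟨h, hdd, rfl, hTT⟩
  · -- regular step
    have hval : ∀ i, (x + θ • (Pi.single j 1 - x) : Fin n → ℝ) i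
        = (1 - θ) * x i + θ * (Pi.single j 1 : Fin n → ℝ) i := by
      intro i; simp; ring
    have hsn : ∀ i, 0 ≤ (Pi.single j 1 : Fin n → ℝ) i := by
      intro i
      by_cases hi : i = j
      · subst hi; simp
      · simp [hi]
    refine ⟨fun i => ?_, ?_, Or.inl ⟨hgood (by linarith), ?_⟩⟩
    · rw [hval]
      exact add_nonneg (mul_nonneg (by linarith) (hx i)) (mul_nonneg hθ0 (hsn i))
    · simp_rw [hval]
      rw [Finset.sum_add_distrib, ← Finset.mul_sum, ← Finset.mul_sum, hs]
      simp
    · refine (Finset.card_le_card (t := insert j (Finset.univ.filter fun i => 0 < x i)) ?_).trans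
        (Finset.card_insert_le _ _)
      intro i hi
      rw [Finset.mem_filter, hval] at hi
      rw [Finset.mem_insert, Finset.mem_filter]
      by_cases hij : i = j
      · exact Or.inl hij
      · right
        refine ⟨Finset.mem_univ _, lt_of_le_of_ne (hx i) ?_⟩
        intro h0
        have := hi.2
        rw [← h0] at this
        simp [hij] at this
  · -- away step
    have hval : ∀ i, (x + θ • (x - Pi.single l 1) : Fin n → ℝ) i
        = (1 + θ) * x i - θ * (Pi.single l 1 : Fin n → ℝ) i := by
      intro i; simp; ring
    have hsub : ∀ i, 0 < (x + θ • (x - Pi.single l 1) : Fin n → ℝ) i → 0 < x i := by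
      intro i hi
      refine lt_of_le_of_ne (hx i) fun h0 => ?_
      have hil : i ≠ l := by
        rintro rfl; linarith
      rw [hval, ← h0] at hi
      simp [hil] at hi
    have hl' : θ * (1 - x l) ≤ x l := by
      rcases eq_or_lt_of_le hxl with h1 | h1
      · rw [h1]; norm_num
      · rw [← le_div_iff₀ (by linarith)]
        linarith
    refine ⟨fun i => ?_, ?_, ?_⟩
    · rw [hval]
      by_cases hil : i = l
      · subst hil; simp; linarith
      · simp only [Pi.single_apply, hil, if_false, mul_zero, sub_zero]
        exact mul_nonneg (by linarith) (hx i)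
    · simp_rw [hval]
      rw [Finset.sum_sub_distrib, ← Finset.mul_sum, ← Finset.mul_sum, hs]
      simp
    · by_cases hT : g / 8 ≤ T
      · refine Or.inl ⟨hgood hT, (Finset.card_le_card ?_).trans (Nat.le_succ _)⟩
        intro i hi
        rw [Finset.mem_filter] at hi ⊢
        exact ⟨hi.1, hsub i hi.2⟩
      · push Not at hT
        right
        have hx1 : x l < 1 := by
          refine lt_of_le_of_ne hxl fun h1 => ?_
          have hxe : x = Pi.single l 1 := by
            have hz : ∑ i ∈ Finset.univ.erase l, x i = 0 := by
              have := Finset.add_sum_erase Finset.univ x (Finset.mem_univ l)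
              linarith
            rw [Finset.sum_eq_zero_iff_of_nonneg (fun i _ => hx i)] at hz
            ext i
            by_cases hil : i = l
            · subst hil; simp [h1]
            · simp [hil, hz i (Finset.mem_erase.2 ⟨hil, Finset.mem_univ _⟩)]
          have : d = 0 := by
            rw [hdd, hxe, comb_single, sub_self]
          rw [this, inner_zero_left] at hd
          linarith
        have hθ : θ = T := by
          refine le_antisymm hθT ?_
          by_contra! hlt
          have h1 := hmin2 T hT0 le_rfl
          rw [hexp, hexp] at h1
          have h2 : (T + θ) * ‖d‖ ^ 2 ≤ (T + θ) * 4 :=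
            mul_le_mul_of_nonneg_left hD (by linarith)
          have h3 : 0 < (T - θ) * (- (2 * ⟪d, comb a x⟫ + (T + θ) * ‖d‖ ^ 2)) :=
            mul_pos (by linarith) (by linarith)
          nlinarith
        have hz : (x + θ • (x - Pi.single l 1) : Fin n → ℝ) l = 0 := by
          rw [hval, hθ, hTT]
          have : 1 - x l ≠ 0 := by linarith
          simp
          field_simp
          ring
        refine ⟨?_, ?_⟩
        · have := hmin2 0 le_rfl hT0
          simpa using this
        · refine Finset.card_lt_card ?_
          refine (Finset.ssubset_iff_of_subset ?_).2 ⟨l, by simpa using hl0, ?_⟩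
          · intro i hi
            rw [Finset.mem_filter] at hi ⊢
            exact ⟨hi.1, hsub i hi.2⟩
          · rw [Finset.mem_filter, hz]; simp

/-- linear convergence of the von Neumann algorithm with away steps when
`0 ∈ conv(A)`: `‖y k‖² ≤ (1 - w(A)²/16)^(k/2) ‖y 0‖²`. -/
theorem stmt5 (m n : ℕ) (hn : 0 < n) (a : Fin n → EuclideanSpace ℝ (Fin m))
    (hnorm : ∀ i, ‖a i‖ = 1)
    (h0 : (0 : EuclideanSpace ℝ (Fin m)) ∈ convexHull ℝ (Set.range a))
    (x : ℕ → Fin n → ℝ) (y : ℕ → EuclideanSpace ℝ (Fin m))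
    (hy : ∀ k, y k = comb a (x k))
    (hx0 : ∃ i : Fin n, x 0 = Pi.single i 1)
    (hstep : ∀ k : ℕ, VNAwayStep a (x k) (x (k + 1)) (y k)) :
    ∀ k : ℕ, 1 ≤ k →
      ‖y k‖ ^ 2 ≤ (1 - relWidth a ^ 2 / 16) ^ ((k : ℝ) / 2) * ‖y 0‖ ^ 2 := by
  have hw0 := relWidth_nonneg a hnorm
  have hw2 : relWidth a ≤ 2 := by
    obtain ⟨i, hi⟩ := hx0
    obtain ⟨j, l, -, -, -, -, hj, hl0, hl, -⟩ := hstep 0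
    rw [hy 0] at hj hl
    have hc : ‖comb a (x 0)‖ = 1 := by rw [hi, comb_single, hnorm]
    have h1 := relWidth_mul_le a hnorm (x 0)
      (by
        intro k; rw [hi]
        by_cases hk : k = i
        · subst hk; simp
        · simp [hk]) j l hj hl0 hl
    have h2 := inner_sub_le_two a hnorm (comb a (x 0)) l j
    rw [hc] at h1 h2
    linarith
  have hr0 : 0 < 1 - relWidth a ^ 2 / 16 := by nlinarith
  have hr1 : 1 - relWidth a ^ 2 / 16 ≤ 1 := by nlinarith
  have key : ∀ k : ℕ, (∀ i, 0 ≤ x k i) ∧ ∑ i, x k i = 1 ∧ ∃ N : ℕ,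
      (Finset.univ.filter fun i => 0 < x k i).card + k ≤ 1 + 2 * N ∧
      ‖y k‖ ^ 2 ≤ (1 - relWidth a ^ 2 / 16) ^ N * ‖y 0‖ ^ 2 := by
    intro k
    induction k with
    | zero =>
      obtain ⟨i, hi⟩ := hx0
      refine ⟨?_, ?_, 0, ?_, by simp⟩
      · intro k; rw [hi]
        by_cases hk : k = i
        · subst hk; simp
        · simp [hk]
      · rw [hi]; simp
      · rw [hi]
        have : (Finset.univ.filter fun k => 0 < (Pi.single i 1 : Fin n → ℝ) k) ⊆ {i} := by
          intro k hk
          rw [Finset.mem_filter] at hk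
          by_contra hki
          simp at hki
          simp [hki] at hk
        simpa using Finset.card_le_card this
    | succ k ih =>
      obtain ⟨hx, hs, N, hN, hyk⟩ := ih
      have hst := hstep k
      rw [hy k] at hst
      obtain ⟨h1, h2, h3⟩ := step_main a hnorm _ _ hx hs hst
      rw [← hy, ← hy] at h3
      refine ⟨h1, h2, ?_⟩
      rcases h3 with ⟨h3, h4⟩ | ⟨h3, h4⟩
      · refine ⟨N + 1, by omega, h3.trans ?_⟩
        rw [pow_succ' _ N, mul_assoc]
        exact mul_le_mul_of_nonneg_left hyk hr0.le
      · exact ⟨N, by omega, h3.trans hyk⟩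
  intro k _
  obtain ⟨hx, hs, N, hN, hyk⟩ := key k
  have hpos : 0 < (Finset.univ.filter fun i => 0 < x k i).card := by
    obtain ⟨-, l, -, -, -, -, -, hl0, -⟩ := hstep k
    exact Finset.card_pos.2 ⟨l, by simpa using hl0⟩
  refine hyk.trans (mul_le_mul_of_nonneg_right ?_ (sq_nonneg _))
  rw [← Real.rpow_natCast]
  apply Real.rpow_le_rpow_of_exponent_ge hr0 hr1
  have : (k : ℝ) ≤ 2 * N := by exact_mod_cast (by omega : k ≤ 2 * N)
  linarith
end

section
/- Let Q ∈ ℝ^{m×m} be symmetric positive definite, b ∈ ℝ^m, f(y) := (1/2)⟨y, Qy⟩ + ⟨b, y⟩, and let C ⊆ ℝ^m be a convex set. Suppose y* ∈ C minimizes f over C and y ∈ C with y ≠ y*. Then ⟨∇f(y), y − y*⟩ / ‖y − y*‖_Q ≥ √(2(f(y) − f(y*))), where ‖v‖_Q := √⟨v, Qv⟩. -/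
open scoped RealInnerProductSpace BigOperators

/-- for `f(y) = ½⟪y, Qy⟫ + ⟪b, y⟫` with `Q` symmetric positive definite,
if `y*` minimizes `f` over a convex set `C` and `y ∈ C`, `y ≠ y*`, then
`⟪∇f(y), y - y*⟫ / ‖y - y*‖_Q ≥ √(2(f(y) - f(y*)))`, where `‖v‖_Q = √⟪v, Qv⟫`. -/
theorem stmt10 (m : ℕ) (Q : EuclideanSpace ℝ (Fin m) →ₗ[ℝ] EuclideanSpace ℝ (Fin m))
    (hsymm : ∀ u v : EuclideanSpace ℝ (Fin m), ⟪Q u, v⟫ = ⟪u, Q v⟫)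
    (hpd : ∀ v : EuclideanSpace ℝ (Fin m), v ≠ 0 → 0 < ⟪v, Q v⟫)
    (b : EuclideanSpace ℝ (Fin m)) (f : EuclideanSpace ℝ (Fin m) → ℝ)
    (hf : ∀ y, f y = 1 / 2 * ⟪y, Q y⟫ + ⟪b, y⟫)
    (C : Set (EuclideanSpace ℝ (Fin m))) (hC : Convex ℝ C)
    (ystar : EuclideanSpace ℝ (Fin m)) (hystar : ystar ∈ C)
    (hmin : ∀ z ∈ C, f ystar ≤ f z)
    (y : EuclideanSpace ℝ (Fin m)) (hyC : y ∈ C) (hne : y ≠ ystar) :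
    Real.sqrt (2 * (f y - f ystar)) ≤
      ⟪Q y + b, y - ystar⟫ / Real.sqrt ⟪y - ystar, Q (y - ystar)⟫ := by
  obtain ⟨d, rfl⟩ : ∃ d, y = ystar + d := ⟨y - ystar, by abel⟩
  have hd : d ≠ 0 := by
    rintro rfl
    simp at hne
  have hs := hpd d hd
  have hkey : ∀ t : ℝ, f (ystar + t • d) =
      f ystar + t * ⟪Q ystar + b, d⟫ + t ^ 2 / 2 * ⟪d, Q d⟫ := by
    intro t
    have h1 : ⟪d, Q ystar⟫ = ⟪Q ystar, d⟫ := real_inner_comm _ _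
    have h2 := hsymm ystar d
    rw [hf, hf]
    simp only [map_add, map_smul, inner_add_left, inner_add_right, real_inner_smul_left,
      real_inner_smul_right, h1, ← h2]
    ring
  have hG : ⟪Q (ystar + d) + b, d⟫ = ⟪Q ystar + b, d⟫ + ⟪d, Q d⟫ := by
    rw [← hsymm d d]
    simp only [map_add, inner_add_left]
    ring
  have hmem : ∀ t : ℝ, 0 ≤ t → t ≤ 1 → ystar + t • d ∈ C := fun t h0 h1 =>
    hC.add_smul_mem hystar hyC ⟨h0, h1⟩
  rw [add_sub_cancel_left, hG]
  have h1 := hkey 1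
  rw [one_smul] at h1
  rw [h1]
  have hm : ∀ t : ℝ, 0 ≤ t → t ≤ 1 →
      0 ≤ t * ⟪Q ystar + b, d⟫ + t ^ 2 / 2 * ⟪d, Q d⟫ := by
    intro t h0 h1
    have := hmin _ (hmem t h0 h1)
    rw [hkey] at this
    linarith
  generalize ⟪Q ystar + b, d⟫ = g at *
  generalize ⟪d, Q d⟫ = s at *
  have hg : 0 ≤ g := by
    by_contra! hneg
    rcases le_total (-g) s with h | h
    · have := hm (-g / s) (div_nonneg (by linarith) hs.le) ((div_le_one hs).2 h)
      have e : -g / s * g + (-g / s) ^ 2 / 2 * s = -(g ^ 2 / (2 * s)) := by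
        field_simp
        ring
      rw [e] at this
      have : 0 < g ^ 2 / (2 * s) := by
        have := hneg.ne
        positivity
      linarith
    · have := hm 1 zero_le_one le_rfl
      linarith
  rw [le_div_iff₀ (Real.sqrt_pos.2 hs), ← Real.sqrt_mul' _ hs.le]
  apply Real.sqrt_le_iff.2
  constructor
  · linarith
  · nlinarith [sq_nonneg g]
end

section
/- Let A = [a_1, ..., a_n] ∈ ℝ^{m×n} be nonzero, Q ∈ ℝ^{m×m} symmetric positive definite, b ∈ ℝ^m, f(y) := (1/2)⟨y, Qy⟩ + ⟨b, y⟩. Let x* ∈ Δ_{n−1} minimize f(Ax) over x ∈ Δ_{n−1}, set y* := Ax*, and let Ā := Q^{1/2}[a_1 − y*, ..., a_n − y*]. Then for all x ∈ Δ_{n−1}: max{⟨∇f(Ax), a_ℓ − a_j⟩ : ℓ ∈ S(x), j ∈ {1,...,n}} ≥ φ(Ā) · √(2(f(Ax) − f(y*))). -/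
open scoped RealInnerProductSpace BigOperators

/-- `φ(A, x) = sup {λ > 0 : ∃ u v ∈ Δ_{n-1}, S(u) ⊆ S(x), Au - Av = (λ/‖Ax‖) Ax}`. -/
noncomputable def phiAt {m n : ℕ} (a : Fin n → EuclideanSpace ℝ (Fin m))
    (x : Fin n → ℝ) : ℝ :=
  sSup {lam : ℝ | 0 < lam ∧ ∃ u ∈ stdSimplex ℝ (Fin n), ∃ v ∈ stdSimplex ℝ (Fin n),
    (∀ i, 0 < u i → 0 < x i) ∧
    comb a u - comb a v = (lam / ‖comb a x‖) • comb a x}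

/-- The restricted width `φ(A) = min {φ(A, x) : x ≥ 0, Ax ≠ 0}`. -/
noncomputable def phi {m n : ℕ} (a : Fin n → EuclideanSpace ℝ (Fin m)) : ℝ :=
  sInf {t : ℝ | ∃ x : Fin n → ℝ, (∀ i, 0 ≤ x i) ∧ comb a x ≠ 0 ∧ t = phiAt a x}

lemma comb_bar {m n : ℕ} (a abar : Fin n → EuclideanSpace ℝ (Fin m))
    (R : EuclideanSpace ℝ (Fin m) →ₗ[ℝ] EuclideanSpace ℝ (Fin m))
    (ystar : EuclideanSpace ℝ (Fin m)) (habar : ∀ i, abar i = R (a i - ystar))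
    (u : Fin n → ℝ) (hu : u ∈ stdSimplex ℝ (Fin n)) :
    comb abar u = R (comb a u - ystar) := by
  have h1 : comb a u - ystar = ∑ i, u i • (a i - ystar) := by
    simp only [smul_sub, Finset.sum_sub_distrib, ← Finset.sum_smul, hu.2, one_smul, comb]
  rw [h1, map_sum]
  simp [comb, habar]

lemma inner_le_max {m n : ℕ} (a : Fin n → EuclideanSpace ℝ (Fin m))
    (g : EuclideanSpace ℝ (Fin m)) (x u v : Fin n → ℝ) (M : ℝ)
    (hu : u ∈ stdSimplex ℝ (Fin n)) (hv : v ∈ stdSimplex ℝ (Fin n))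
    (hux : ∀ i, 0 < u i → 0 < x i)
    (hM : ∀ l j, 0 < x l → ⟪g, a l - a j⟫ ≤ M) :
    ⟪g, comb a u - comb a v⟫ ≤ M := by
  have h1 : ∀ l, 0 < x l → ⟪g, a l⟫ - M ≤ ⟪g, comb a v⟫ := by
    intro l hl
    have : ∑ j, v j * (⟪g, a l⟫ - M) ≤ ∑ j, v j * ⟪g, a j⟫ := by
      refine Finset.sum_le_sum fun j _ => mul_le_mul_of_nonneg_left ?_ (hv.1 j)
      have := hM l j hl
      rw [inner_sub_right] at this
      linarith
    rw [← Finset.sum_mul, hv.2, one_mul] at this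
    simpa [comb, inner_sum, inner_smul_right] using this
  have h2 : ∑ i, u i * ⟪g, a i⟫ ≤ ∑ i, u i * (⟪g, comb a v⟫ + M) := by
    refine Finset.sum_le_sum fun i _ => ?_
    rcases (hu.1 i).eq_or_lt with h | h
    · simp [← h]
    · have := h1 i (hux i h)
      exact mul_le_mul_of_nonneg_left (by linarith) h.le
  rw [← Finset.sum_mul, hu.2, one_mul] at h2
  have h3 : ⟪g, comb a u⟫ = ∑ i, u i * ⟪g, a i⟫ := by
    simp [comb, inner_sum, inner_smul_right]
  rw [inner_sub_right, h3]
  linarith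

/-- with `y* = Ax*` a minimizer of `f` over `conv(A)`,
`Ā = Q^{1/2}[a₁ - y*, …, aₙ - y*]`, for every `x ∈ Δ_{n-1}`:
`max {⟪∇f(Ax), a ℓ - a j⟫ : ℓ ∈ S(x), j} ≥ φ(Ā)·√(2(f(Ax) - f(y*)))`. -/
theorem stmt11 (m n : ℕ) (hn : 0 < n) (a : Fin n → EuclideanSpace ℝ (Fin m))
    (hA : ∃ i, a i ≠ 0)
    (Q : EuclideanSpace ℝ (Fin m) →ₗ[ℝ] EuclideanSpace ℝ (Fin m))
    (hsymm : ∀ u v : EuclideanSpace ℝ (Fin m), ⟪Q u, v⟫ = ⟪u, Q v⟫)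
    (hpd : ∀ v : EuclideanSpace ℝ (Fin m), v ≠ 0 → 0 < ⟪v, Q v⟫)
    (b : EuclideanSpace ℝ (Fin m)) (f : EuclideanSpace ℝ (Fin m) → ℝ)
    (hf : ∀ y, f y = 1 / 2 * ⟪y, Q y⟫ + ⟪b, y⟫)
    -- `R = Q^{1/2}`, the symmetric positive definite square root of `Q`
    (R : EuclideanSpace ℝ (Fin m) →ₗ[ℝ] EuclideanSpace ℝ (Fin m))
    (hRsymm : ∀ u v : EuclideanSpace ℝ (Fin m), ⟪R u, v⟫ = ⟪u, R v⟫)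
    (hRpd : ∀ v : EuclideanSpace ℝ (Fin m), v ≠ 0 → 0 < ⟪v, R v⟫)
    (hRsq : ∀ v, R (R v) = Q v)
    (xstar : Fin n → ℝ) (hxstar : xstar ∈ stdSimplex ℝ (Fin n))
    (hmin : ∀ x ∈ stdSimplex ℝ (Fin n), f (comb a xstar) ≤ f (comb a x))
    (ystar : EuclideanSpace ℝ (Fin m)) (hystar : ystar = comb a xstar)
    (abar : Fin n → EuclideanSpace ℝ (Fin m)) (habar : ∀ i, abar i = R (a i - ystar)) :
    ∀ x ∈ stdSimplex ℝ (Fin n),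
      phi abar * Real.sqrt (2 * (f (comb a x) - f ystar)) ≤
        sSup {t : ℝ | ∃ ℓ j : Fin n, 0 < x ℓ ∧
          t = ⟪Q (comb a x) + b, a ℓ - a j⟫} := by
  intro x hx
  set S := {t : ℝ | ∃ ℓ j : Fin n, 0 < x ℓ ∧ t = ⟪Q (comb a x) + b, a ℓ - a j⟫} with hS
  set M := sSup S with hMdef
  have hbdd : BddAbove S := by
    apply Set.Finite.bddAbove
    apply (Set.finite_range (fun p : Fin n × Fin n =>
      ⟪Q (comb a x) + b, a p.1 - a p.2⟫)).subset
    rintro t ⟨l, j, _, rfl⟩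
    exact ⟨(l, j), rfl⟩
  have hM : ∀ l j, 0 < x l → ⟪Q (comb a x) + b, a l - a j⟫ ≤ M := fun l j hl =>
    le_csSup hbdd ⟨l, j, hl, rfl⟩
  have hM0 : 0 ≤ M := by
    have := inner_le_max a (Q (comb a x) + b) x x x M hx hx (fun _ h => h) hM
    simpa using this
  set D := f (comb a x) - f ystar with hD
  rcases (Real.sqrt_nonneg (2 * D)).eq_or_lt with h0 | h0
  · rw [← h0, mul_zero]; exact hM0
  have hDpos : 0 < 2 * D := Real.sqrt_pos.mp h0
  set d := comb a x - ystar with hd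
  have hy : comb a x = ystar + d := by rw [hd]; abel
  have hcx : comb abar x = R d := comb_bar a abar R ystar habar x hx
  have hne : comb abar x ≠ 0 := by
    rw [hcx]
    intro h
    have hd0 : d = 0 := by
      by_contra hdne
      have := hRpd d hdne
      rw [h, inner_zero_right] at this
      exact lt_irrefl _ this
    rw [hD, hy, hd0, add_zero] at hDpos
    simp at hDpos
  have hnp : 0 < ‖comb abar x‖ := norm_pos_iff.mpr hne
  have hnsq : ‖comb abar x‖ ^ 2 = ⟪d, Q d⟫ := by
    rw [hcx, ← real_inner_self_eq_norm_sq, hRsymm, hRsq]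
  have hgd : ⟪Q (comb a x) + b, d⟫ = D + 1 / 2 * ‖comb abar x‖ ^ 2 := by
    rw [hnsq, hD, hf, hf, hy]
    have e1 := hsymm ystar d
    have e2 := hsymm d d
    have e3 : ⟪d, Q ystar⟫ = ⟪ystar, Q d⟫ := by rw [← hsymm, real_inner_comm]
    simp only [map_add, inner_add_left, inner_add_right]
    rw [e1, e2, e3]
    ring
  have hkey : Real.sqrt (2 * D) * ‖comb abar x‖ ≤ ⟪Q (comb a x) + b, d⟫ := by
    rw [hgd]
    have := Real.sq_sqrt hDpos.le
    nlinarith [sq_nonneg (Real.sqrt (2 * D) - ‖comb abar x‖)]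
  have hphi : phi abar ≤ phiAt abar x := by
    refine csInf_le ⟨0, ?_⟩ ⟨x, hx.1, hne, rfl⟩
    rintro t ⟨z, _, _, rfl⟩
    exact Real.sSup_nonneg fun l hl => hl.1.le
  refine (mul_le_mul_of_nonneg_right hphi h0.le).trans ?_
  rw [← le_div_iff₀ h0]
  refine Real.sSup_le ?_ (div_nonneg hM0 h0.le)
  rintro lam ⟨hl, u, hu, v, hv, hux, he⟩
  rw [le_div_iff₀ h0]
  rw [comb_bar a abar R ystar habar u hu, comb_bar a abar R ystar habar v hv] at he
  have he2 : comb a u - comb a v = (lam / ‖comb abar x‖) • d := by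
    by_contra hc
    have := hRpd _ (sub_ne_zero.mpr hc)
    have hz : R (comb a u - comb a v - (lam / ‖comb abar x‖) • d) = 0 := by
      rw [map_sub, map_smul, ← hcx, ← he, ← map_sub, ← map_sub]
      convert map_zero R using 2
      abel
    rw [hz, inner_zero_right] at this
    exact lt_irrefl _ this
  have h5 := inner_le_max a (Q (comb a x) + b) x u v M hu hv hux hM
  rw [he2, inner_smul_right] at h5
  refine le_trans ?_ h5
  calc lam * Real.sqrt (2 * D)
      = (lam / ‖comb abar x‖) * (Real.sqrt (2 * D) * ‖comb abar x‖) := by field_simp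
    _ ≤ _ := mul_le_mul_of_nonneg_left hkey (by positivity)
end

section
/- Let A = [a_1, ..., a_n] ∈ ℝ^{m×n} be nonzero and let (B, N) be the canonical partition of {1,...,n} (B ∪ N = {1,...,n}, B ∩ N = ∅, A_B x_B = 0 with x_B > 0 is feasible, and A_N^T y > 0, A_B^T y = 0 is feasible). Suppose N ≠ ∅ and L := span(A_B) ≠ {0}. Then φ(A) ≥ |ρ_B(A)| ρ_N(A) / √(‖A‖² + ρ_N(A)²), where ‖A‖ := max_{i=1,...,n} ‖a_i‖₂, ρ_B(A) := max_{z ∈ L, ‖z‖₂=1} min_{i ∈ B} ⟨a_i, z⟩, and ρ_N(A) := max_{z ∈ L^⊥, ‖z‖₂=1} min_{i ∈ N} ⟨a_i, z⟩. -/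
open scoped RealInnerProductSpace BigOperators

theorem aux_sep {m n : ℕ} (a : Fin n → EuclideanSpace ℝ (Fin m)) (x : Fin n → ℝ)
    (p : EuclideanSpace ℝ (Fin m))
    (h : ∀ z : EuclideanSpace ℝ (Fin m),
      ∃ i j, 0 < x i ∧ ⟪p, z⟫ ≤ ⟪a i, z⟫ - ⟪a j, z⟫) :
    ∃ u ∈ stdSimplex ℝ (Fin n), ∃ v ∈ stdSimplex ℝ (Fin n),
      (∀ i, 0 < u i → 0 < x i) ∧ comb a u - comb a v = p := by
  classical
  set T : ((Fin n → ℝ) × (Fin n → ℝ)) →ₗ[ℝ] EuclideanSpace ℝ (Fin m) :=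
    (Fintype.linearCombination ℝ a).comp (LinearMap.fst ℝ _ _) -
    (Fintype.linearCombination ℝ a).comp (LinearMap.snd ℝ _ _) with hT
  have hTa : ∀ q, T q = comb a q.1 - comb a q.2 := by
    intro q
    simp [hT, comb, Fintype.linearCombination_apply]
  set S : Set (Fin n → ℝ) := stdSimplex ℝ (Fin n) ∩ {u | ∀ i, ¬ 0 < x i → u i = 0} with hS
  have hScl : IsClosed {u : Fin n → ℝ | ∀ i, ¬ 0 < x i → u i = 0} := by
    simp only [Set.ofPred_forall]
    refine isClosed_iInter fun i => isClosed_iInter fun _ => ?_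
    exact isClosed_eq (continuous_apply i) continuous_const
  have hScomp : IsCompact S := (isCompact_stdSimplex ℝ (Fin n)).inter_right hScl
  have hSconv : Convex ℝ S := by
    refine (convex_stdSimplex ℝ (Fin n)).inter ?_
    intro u hu v hv α β _ _ _ i hi
    simp [hu i hi, hv i hi]
  set C := T '' (S ×ˢ stdSimplex ℝ (Fin n)) with hC
  have hCc : IsCompact C :=
    (hScomp.prod (isCompact_stdSimplex ℝ (Fin n))).image T.continuous_of_finiteDimensional
  have hCconv : Convex ℝ C :=
    (hSconv.prod (convex_stdSimplex ℝ (Fin n))).linear_image T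
  by_cases hp : p ∈ C
  · obtain ⟨⟨u, v⟩, ⟨hu, hv⟩, huv⟩ := hp
    refine ⟨u, hu.1, v, hv, ?_, ?_⟩
    · intro i hi
      by_contra hxi
      have := hu.2 i hxi
      exact absurd this hi.ne'
    · rw [← huv, hTa]
  · exfalso
    obtain ⟨f, s, hf1, hf2⟩ := geometric_hahn_banach_closed_point hCconv hCc.isClosed hp
    set z := (InnerProductSpace.toDual ℝ (EuclideanSpace ℝ (Fin m))).symm f with hz
    have hfz : ∀ w, f w = ⟪w, z⟫ := by
      intro w
      rw [real_inner_comm, hz, InnerProductSpace.toDual_symm_apply]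
    obtain ⟨i, j, hi, hij⟩ := h z
    have hmem : a i - a j ∈ C := by
      refine ⟨(Pi.single i 1, Pi.single j 1), ⟨⟨single_mem_stdSimplex ℝ i, ?_⟩,
        single_mem_stdSimplex ℝ j⟩, ?_⟩
      · intro k hk
        have : k ≠ i := by
          rintro rfl
          exact hk hi
        simp [this]
      · rw [hTa]
        simp [comb, Pi.single_apply]
    have h1 := hf1 _ hmem
    rw [hfz] at h1 hf2
    rw [inner_sub_left] at h1
    linarith

theorem aux_bdd {m n : ℕ} (a : Fin n → EuclideanSpace ℝ (Fin m)) (x : Fin n → ℝ)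
    (hx : comb a x ≠ 0) :
    BddAbove {lam : ℝ | 0 < lam ∧ ∃ u ∈ stdSimplex ℝ (Fin n), ∃ v ∈ stdSimplex ℝ (Fin n),
    (∀ i, 0 < u i → 0 < x i) ∧
    comb a u - comb a v = (lam / ‖comb a x‖) • comb a x} := by
  have key : ∀ u ∈ stdSimplex ℝ (Fin n), ‖comb a u‖ ≤ ∑ i, ‖a i‖ := by
    intro u hu
    refine (norm_sum_le _ _).trans (Finset.sum_le_sum fun i _ => ?_)
    rw [norm_smul, Real.norm_of_nonneg (hu.1 i)]
    have : u i ≤ 1 := by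
      rw [← hu.2]
      exact Finset.single_le_sum (fun k _ => hu.1 k) (Finset.mem_univ i)
    exact mul_le_of_le_one_left (norm_nonneg _) this
  refine ⟨∑ i, ‖a i‖ + ∑ i, ‖a i‖, ?_⟩
  rintro lam ⟨hl, u, hu, v, hv, -, he⟩
  have h1 : ‖(lam / ‖comb a x‖) • comb a x‖ = lam := by
    have : 0 < ‖comb a x‖ := norm_pos_iff.mpr hx
    rw [norm_smul, Real.norm_of_nonneg (by positivity)]
    field_simp
  rw [← h1, ← he]
  exact (norm_sub_le _ _).trans (add_le_add (key u hu) (key v hv))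

theorem aux_inf {ι : Type*} (B : Finset ι) (g : ι → ℝ) (hB : B.Nonempty) :
    (∀ i ∈ B, sInf {s : ℝ | ∃ i ∈ B, s = g i} ≤ g i) ∧
    ∃ i ∈ B, g i = sInf {s : ℝ | ∃ i ∈ B, s = g i} := by
  have hset : {s : ℝ | ∃ i ∈ B, s = g i} = g '' (B : Set ι) := by
    ext s
    simp only [Set.mem_ofPred_eq, Set.mem_image, Finset.mem_coe, eq_comm]
  have hfin : {s : ℝ | ∃ i ∈ B, s = g i}.Finite := by
    rw [hset]
    exact (Finset.finite_toSet B).image _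
  obtain ⟨i0, hi0⟩ := hB
  constructor
  · intro i hi
    exact csInf_le hfin.bddBelow ⟨i, hi, rfl⟩
  · obtain ⟨i, hi, h⟩ := Set.Nonempty.csInf_mem (s := {s : ℝ | ∃ i ∈ B, s = g i}) ⟨g i0, i0, hi0, rfl⟩ hfin
    exact ⟨i, hi, h.symm⟩

/-- for the canonical partition `(B, N)` of a nonzero matrix `A`, if
`N ≠ ∅` and `L := span(A_B) ≠ {0}`, then
`φ(A) ≥ |ρ_B(A)| ρ_N(A) / √(‖A‖² + ρ_N(A)²)`, where `‖A‖ = max_i ‖a i‖`,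
`ρ_B(A) = max_{z ∈ L, ‖z‖=1} min_{i ∈ B} ⟪a i, z⟫` and
`ρ_N(A) = max_{z ∈ L^⊥, ‖z‖=1} min_{i ∈ N} ⟪a i, z⟫`. -/
theorem stmt18 (m n : ℕ) (hn : 0 < n) (a : Fin n → EuclideanSpace ℝ (Fin m))
    (hA : ∃ i, a i ≠ 0) (B N : Finset (Fin n))
    (hBN : B ∪ N = Finset.univ) (hdisj : B ∩ N = ∅)
    (hB : ∃ xB : Fin n → ℝ, (∀ i ∈ B, 0 < xB i) ∧ ∑ i ∈ B, xB i • a i = 0)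
    (hN : ∃ y : EuclideanSpace ℝ (Fin m),
      (∀ i ∈ N, 0 < ⟪a i, y⟫) ∧ ∀ i ∈ B, ⟪a i, y⟫ = 0)
    (hNne : N.Nonempty)
    (hL : Submodule.span ℝ (a '' (B : Set (Fin n))) ≠ ⊥) (ρB ρN : ℝ)
    (hρB : IsGreatest
      {t : ℝ | ∃ z : EuclideanSpace ℝ (Fin m),
        z ∈ Submodule.span ℝ (a '' (B : Set (Fin n))) ∧ ‖z‖ = 1 ∧
        t = sInf {s : ℝ | ∃ i ∈ B, s = ⟪a i, z⟫}} ρB)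
    (hρN : IsGreatest
      {t : ℝ | ∃ z : EuclideanSpace ℝ (Fin m),
        z ∈ (Submodule.span ℝ (a '' (B : Set (Fin n))))ᗮ ∧ ‖z‖ = 1 ∧
        t = sInf {s : ℝ | ∃ i ∈ N, s = ⟪a i, z⟫}} ρN) :
    |ρB| * ρN / Real.sqrt ((⨆ i : Fin n, ‖a i‖) ^ 2 + ρN ^ 2) ≤ phi a := by
  classical
  set L := Submodule.span ℝ (a '' (B : Set (Fin n))) with hLdef
  set K := ⨆ i : Fin n, ‖a i‖ with hK
  set D := Real.sqrt (K ^ 2 + ρN ^ 2) with hD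
  set c := |ρB| * ρN / D with hc
  have haK : ∀ i, ‖a i‖ ≤ K := fun i => le_ciSup (f := fun i => ‖a i‖) (Set.finite_range _).bddAbove i
  have hK0 : 0 ≤ K := (norm_nonneg _).trans (haK ⟨0, hn⟩)
  have haL : ∀ i ∈ B, a i ∈ L := fun i hi =>
    Submodule.subset_span ⟨i, hi, rfl⟩
  have hBne : B.Nonempty := by
    by_contra hcon
    rw [Finset.not_nonempty_iff_eq_empty] at hcon
    apply hL
    simp [hLdef, hcon]
  unfold phi
  refine le_csInf ?_ ?_
  · obtain ⟨i, hi⟩ := hA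
    refine ⟨_, Pi.single i 1, ?_, ?_, rfl⟩
    · intro j
      by_cases h : j = i
      · subst h
        simp
      · simp [h]
    · simpa [comb, Pi.single_apply] using hi
  rintro t ⟨x, hx0, hxne, rfl⟩
  by_cases hcpos : c ≤ 0
  · refine hcpos.trans (Real.sSup_nonneg ?_)
    rintro lam ⟨hl, -⟩
    exact hl.le
  push Not at hcpos
  have hD0 : 0 ≤ D := Real.sqrt_nonneg _
  have hDpos : 0 < D := by
    rcases hD0.lt_or_eq with h | h
    · exact h
    · rw [hc, ← h] at hcpos
      simp at hcpos
  have hcD : c * D = |ρB| * ρN := by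
    rw [hc]
    field_simp
  have hρNpos : 0 < ρN := by
    have : 0 < |ρB| * ρN := hcD ▸ mul_pos hcpos hDpos
    by_contra hneg
    push Not at hneg
    nlinarith [abs_nonneg ρB]
  have hDsq : D ^ 2 = K ^ 2 + ρN ^ 2 := Real.sq_sqrt (by positivity)
  -- ρB facts
  have hρB0 : ρB ≤ 0 ∧ |ρB| ≤ K := by
    obtain ⟨zB, hzL, hz1, hzρ⟩ := hρB.1
    obtain ⟨h1, i, hi, h2⟩ := aux_inf B (fun i => ⟪a i, zB⟫) hBne
    rw [← hzρ] at h1 h2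
    have hle : ρB ≤ 0 := by
      obtain ⟨xB, hxB, hsum⟩ := hB
      by_contra hpos
      push Not at hpos
      have : 0 < ∑ i ∈ B, xB i * ⟪a i, zB⟫ :=
        Finset.sum_pos (fun k hk => mul_pos (hxB k hk) (hpos.trans_le (h1 k hk))) hBne
      have h0 : ⟪∑ i ∈ B, xB i • a i, zB⟫ = 0 := by rw [hsum, inner_zero_left]
      rw [sum_inner] at h0
      simp only [real_inner_smul_left] at h0
      linarith
    refine ⟨hle, ?_⟩
    rw [← h2]
    have := abs_real_inner_le_norm (a i) zB
    rw [hz1, mul_one] at this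
    exact this.trans (haK i)
  obtain ⟨hρB0, hρBK⟩ := hρB0
  have hmin : ∀ z ∈ L, ∃ j ∈ B, ⟪a j, z⟫ ≤ - (|ρB| * ‖z‖) := by
    intro z hz
    by_cases hz0 : z = 0
    · obtain ⟨j, hj⟩ := hBne
      exact ⟨j, hj, by simp [hz0]⟩
    have hzn : 0 < ‖z‖ := norm_pos_iff.mpr hz0
    obtain ⟨-, j, hj, h2⟩ := aux_inf B (fun i => ⟪a i, (‖z‖⁻¹ • z)⟫) hBne
    have h3 := hρB.2 ⟨‖z‖⁻¹ • z, L.smul_mem _ hz, by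
      rw [norm_smul, norm_inv, norm_norm, inv_mul_cancel₀ hzn.ne'], rfl⟩
    rw [← h2] at h3
    simp only [real_inner_smul_right] at h3
    refine ⟨j, hj, ?_⟩
    rw [abs_of_nonpos hρB0]
    rw [inv_mul_le_iff₀ hzn] at h3
    linarith
  obtain ⟨y, hyL, hy1, hyρ⟩ := hρN.1
  have hyN : ∀ i ∈ N, ρN ≤ ⟪a i, y⟫ := by
    have := (aux_inf N (fun i => ⟪a i, y⟫) hNne).1
    rwa [← hyρ] at this
  set W := comb a x with hW
  have hω : 0 < ‖W‖ := norm_pos_iff.mpr hxne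
  set XB := ∑ i ∈ B, x i • a i with hXB
  set XN := ∑ i ∈ N, x i • a i with hXN
  have hWs : W = XB + XN := by
    rw [hW, comb, ← hBN, Finset.sum_union (Finset.disjoint_iff_inter_eq_empty.mpr hdisj)]
  set σ := ∑ i ∈ N, x i with hσ
  have hσ0 : 0 ≤ σ := Finset.sum_nonneg fun i _ => hx0 i
  have hXBL : XB ∈ L := L.sum_mem fun i hi => L.smul_mem _ (haL i hi)
  have hXNn : ‖XN‖ ≤ K * σ := by
    refine (norm_sum_le _ _).trans ?_
    rw [hσ, Finset.mul_sum]
    refine Finset.sum_le_sum fun i _ => ?_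
    rw [norm_smul, Real.norm_of_nonneg (hx0 i), mul_comm]
    exact mul_le_mul_of_nonneg_right (haK i) (hx0 i)
  -- decomposition of W
  set WL := L.starProjection W with hWL
  set WP := W - WL with hWP
  have hWLm : WL ∈ L := L.starProjection_apply_mem W
  have hWPm : WP ∈ Lᗮ := L.sub_starProjection_mem_orthogonal W
  have hpyth : ‖W‖ ^ 2 = ‖WL‖ ^ 2 + ‖WP‖ ^ 2 := by
    have h0 : ⟪WL, WP⟫ = 0 := hWPm _ hWLm
    have h1 : W = WL + WP := by rw [hWP]; abel
    rw [h1, norm_add_sq_real, h0]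
    ring
  have hσq : ρN * σ ≤ ‖WP‖ := by
    have h1 : ρN * σ ≤ ⟪XN, y⟫ := by
      rw [hσ, Finset.mul_sum, hXN, sum_inner]
      refine Finset.sum_le_sum fun i hi => ?_
      rw [real_inner_smul_left, mul_comm]
      exact mul_le_mul_of_nonneg_left (hyN i hi) (hx0 i)
    have h2 : ⟪XB, y⟫ = 0 := hyL _ hXBL
    have h3 : ⟪WL, y⟫ = 0 := hyL _ hWLm
    have h4 : ⟪WP, y⟫ = ⟪XN, y⟫ := by
      rw [hWP, inner_sub_left, h3, hWs, inner_add_left, h2]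
      ring
    have h5 := real_inner_le_norm WP y
    rw [hy1, mul_one] at h5
    linarith
  have hp : ‖XB‖ ≤ ‖WL‖ + K * σ := by
    have h1 : XB = WL - L.starProjection XN := by
      rw [hWL, hWs, map_add, Submodule.starProjection_eq_self_iff.mpr hXBL]
      abel
    rw [h1]
    refine (norm_sub_le _ _).trans ?_
    have := L.norm_starProjection_apply_le XN
    linarith
  have hWPω : ‖WP‖ ≤ ‖W‖ := by
    apply abs_le_of_sq_le_sq' _ hω.le |>.2
    nlinarith [sq_nonneg ‖WL‖]
  have hKD : K ≤ D := by
    apply abs_le_of_sq_le_sq' _ hD0 |>.2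
    nlinarith [sq_nonneg ρN]
  have hρB_nn := abs_nonneg ρB
  have e1 : c * σ ≤ ‖W‖ := by
    refine le_of_mul_le_mul_right ?_ hDpos
    calc c * σ * D = |ρB| * (ρN * σ) := by rw [mul_right_comm, hcD]; ring
      _ ≤ D * ‖W‖ := mul_le_mul (hρBK.trans hKD) (hσq.trans hWPω) (by positivity) hD0
      _ = ‖W‖ * D := mul_comm _ _
  have e2 : c * ‖XB‖ ≤ |ρB| * ‖W‖ := by
    refine le_of_mul_le_mul_right ?_ hDpos
    have h1 : ρN * ‖XB‖ ≤ ρN * ‖WL‖ + K * ‖WP‖ := by nlinarith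
    have h2 : ρN * ‖WL‖ + K * ‖WP‖ ≤ D * ‖W‖ := by
      apply abs_le_of_sq_le_sq' _ (by positivity) |>.2
      rw [mul_pow, hDsq, hpyth]
      nlinarith [sq_nonneg (ρN * ‖WP‖ - K * ‖WL‖)]
    calc c * ‖XB‖ * D = |ρB| * (ρN * ‖XB‖) := by rw [mul_right_comm, hcD]; ring
      _ ≤ |ρB| * (D * ‖W‖) := mul_le_mul_of_nonneg_left (h1.trans h2) hρB_nn
      _ = |ρB| * ‖W‖ * D := by ring
  refine le_csSup (aux_bdd a x hxne) ⟨hcpos, aux_sep a x _ ?_⟩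
  intro z
  -- the support of x is nonempty; maximize
  have hSne : (Finset.univ.filter fun i => 0 < x i).Nonempty := by
    by_contra hcon
    rw [Finset.not_nonempty_iff_eq_empty, Finset.filter_eq_empty_iff] at hcon
    apply hxne
    rw [hW, comb]
    refine Finset.sum_eq_zero fun i hi => ?_
    rw [le_antisymm (not_lt.mp (hcon hi)) (hx0 i), zero_smul]
  obtain ⟨i, hi, hmax⟩ := Finset.exists_max_image _ (fun i => ⟪a i, z⟫) hSne
  simp only [Finset.mem_filter, Finset.mem_univ, true_and] at hi hmax
  set M := ⟪a i, z⟫ with hM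
  have hterm : ∀ k, x k * ⟪a k, z⟫ ≤ x k * M := by
    intro k
    rcases (hx0 k).lt_or_eq with h | h
    · exact mul_le_mul_of_nonneg_left (hmax k h) h.le
    · rw [← h]
      simp
  have hWz : ⟪W, z⟫ = ∑ k, x k * ⟪a k, z⟫ := by
    rw [hW, comb, sum_inner]
    simp only [real_inner_smul_left]
  rw [real_inner_smul_left]
  by_cases hpos : ⟪W, z⟫ ≤ 0
  · refine ⟨i, i, hi, ?_⟩
    rw [sub_self]
    exact mul_nonpos_of_nonneg_of_nonpos (by positivity) hpos
  push Not at hpos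
  have hM0 : 0 ≤ M := by
    by_contra hneg
    push Not at hneg
    have : ∑ k, x k * ⟪a k, z⟫ ≤ 0 := Finset.sum_nonpos fun k _ =>
      (hterm k).trans (mul_nonpos_of_nonneg_of_nonpos (hx0 k) hneg.le)
    linarith
  set zL := L.starProjection z with hzL
  have hzLm : zL ∈ L := L.starProjection_apply_mem z
  have hzP : z - zL ∈ Lᗮ := L.sub_starProjection_mem_orthogonal z
  have hLz : ∀ w ∈ L, ⟪w, z⟫ = ⟪w, zL⟫ := by
    intro w hw
    have : ⟪w, z - zL⟫ = 0 := hzP w hw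
    rw [inner_sub_right] at this
    linarith
  obtain ⟨j, hj, hjm⟩ := hmin zL hzLm
  refine ⟨i, j, hi, ?_⟩
  rw [hLz _ (haL j hj), div_mul_eq_mul_div, div_le_iff₀ hω]
  have h1 : ⟪XN, z⟫ ≤ σ * M := by
    rw [hXN, sum_inner, hσ, Finset.sum_mul]
    refine Finset.sum_le_sum fun k _ => ?_
    rw [real_inner_smul_left]
    exact hterm k
  have h2 : ⟪XB, z⟫ ≤ ‖XB‖ * ‖zL‖ := by
    rw [hLz _ hXBL]
    exact real_inner_le_norm _ _
  have h3 : ⟪W, z⟫ ≤ ‖XB‖ * ‖zL‖ + σ * M := by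
    rw [hWs, inner_add_left]
    linarith
  calc c * ⟪W, z⟫ ≤ c * (‖XB‖ * ‖zL‖ + σ * M) := mul_le_mul_of_nonneg_left h3 hcpos.le
    _ = (c * ‖XB‖) * ‖zL‖ + (c * σ) * M := by ring
    _ ≤ (|ρB| * ‖W‖) * ‖zL‖ + ‖W‖ * M := by gcongr
    _ = (M - -(|ρB| * ‖zL‖)) * ‖W‖ := by ring
    _ ≤ _ := by
      refine mul_le_mul_of_nonneg_right ?_ hω.le
      linarith
end

section
/- Let A = [a_1, ..., a_n] ∈ ℝ^{m×n} be a nonzero matrix with 0 ∈ conv{a_1,...,a_n}. Then w(A) ≥ φ(A) > 0; in particular both the relative width w(A) and the restricted width φ(A) are strictly positive. -/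
open scoped RealInnerProductSpace BigOperators

noncomputable def combL {m n : ℕ} (a : Fin n → EuclideanSpace ℝ (Fin m)) :
    (Fin n → ℝ) →ₗ[ℝ] EuclideanSpace ℝ (Fin m) where
  toFun := comb a
  map_add' x y := by simp [comb, add_smul, Finset.sum_add_distrib]
  map_smul' c x := by simp [comb, Finset.smul_sum, mul_smul]

theorem bound_T {m n : ℕ} (a : Fin n → EuclideanSpace ℝ (Fin m)) (T : Finset (Fin n))
    (hT : ∀ g : Fin n → ℝ, (∀ i, i ∉ T → g i = 0) → comb a g = 0 → g = 0) :
    ∃ C : ℝ, 0 ≤ C ∧ ∀ g : Fin n → ℝ, (∀ i, i ∉ T → g i = 0) →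
      ∑ i, g i ≤ C * ‖comb a g‖ := by
  let W : Submodule ℝ (Fin n → ℝ) :=
    { carrier := {g | ∀ i, i ∉ T → g i = 0}
      add_mem' := by
        intro x y hx hy i hi
        simp [hx i hi, hy i hi]
      zero_mem' := by intro i hi; rfl
      smul_mem' := by
        intro c x hx i hi
        simp [hx i hi] }
  let L : W →ₗ[ℝ] EuclideanSpace ℝ (Fin m) := (combL a).comp W.subtype
  have hL : LinearMap.ker L = ⊥ := by
    rw [LinearMap.ker_eq_bot']
    intro g hg
    exact Subtype.ext (hT g.1 g.2 hg)
  obtain ⟨K, hK, hK2⟩ := LinearMap.exists_antilipschitzWith L hL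
  refine ⟨n * K, by positivity, ?_⟩
  intro g hg
  have h1 := hK2.le_mul_dist (⟨g, hg⟩ : W) 0
  rw [map_zero, dist_zero_right, dist_zero_right] at h1
  have h2 : ‖g‖ ≤ K * ‖comb a g‖ := h1
  calc ∑ i, g i ≤ ∑ i : Fin n, ‖g‖ :=
        Finset.sum_le_sum fun i _ => (le_abs_self _).trans (norm_le_pi_norm g i)
    _ = n * ‖g‖ := by simp
    _ ≤ n * (K * ‖comb a g‖) := by gcongr
    _ = _ := by ring

theorem bound_all {m n : ℕ} (a : Fin n → EuclideanSpace ℝ (Fin m)) :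
    ∃ C : ℝ, 0 < C ∧ ∀ T : Finset (Fin n),
    (∀ g : Fin n → ℝ, (∀ i, i ∉ T → g i = 0) → comb a g = 0 → g = 0) →
    ∀ g : Fin n → ℝ, (∀ i, i ∉ T → g i = 0) →
      ∑ i, g i ≤ C * ‖comb a g‖ := by
  have h : ∀ T : Finset (Fin n), ∃ C : ℝ, 0 ≤ C ∧
    ((∀ g : Fin n → ℝ, (∀ i, i ∉ T → g i = 0) → comb a g = 0 → g = 0) →
    ∀ g : Fin n → ℝ, (∀ i, i ∉ T → g i = 0) →
      ∑ i, g i ≤ C * ‖comb a g‖) := by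
    intro T
    by_cases hT : (∀ g : Fin n → ℝ, (∀ i, i ∉ T → g i = 0) → comb a g = 0 → g = 0)
    · obtain ⟨C, hC, h⟩ := bound_T a T hT
      exact ⟨C, hC, fun _ => h⟩
    · exact ⟨0, le_rfl, fun h => absurd h hT⟩
  choose C hC h using h
  have hs : 0 ≤ ∑ T, C T := Finset.sum_nonneg fun T _ => hC T
  refine ⟨∑ T, C T + 1, by linarith, ?_⟩
  intro T hT g hg
  refine (h T hT g hg).trans ?_
  have : C T ≤ ∑ T, C T := Finset.single_le_sum (fun T _ => hC T) (Finset.mem_univ T)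
  gcongr
  linarith

theorem cara {m n : ℕ} (a : Fin n → EuclideanSpace ℝ (Fin m)) (k : ℕ) :
    ∀ x : Fin n → ℝ, (∀ i, 0 ≤ x i) → (Finset.univ.filter (fun i => x i ≠ 0)).card = k →
    ∃ z : Fin n → ℝ, (∀ i, 0 ≤ z i) ∧ (∀ i, 0 < z i → 0 < x i) ∧ comb a z = comb a x ∧
      (∀ g : Fin n → ℝ, (∀ i, i ∉ Finset.univ.filter (fun i => z i ≠ 0) → g i = 0) →
        comb a g = 0 → g = 0) := by
  induction k using Nat.strong_induction_on with
  | _ k ih =>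
  intro x hx hk
  by_cases hT : (∀ g : Fin n → ℝ, (∀ i, i ∉ Finset.univ.filter (fun i => x i ≠ 0) → g i = 0) →
        comb a g = 0 → g = 0)
  · exact ⟨x, hx, fun _ h => h, rfl, hT⟩
  have hg : ∃ g : Fin n → ℝ, (∀ i, x i = 0 → g i = 0) ∧ comb a g = 0 ∧ ∃ i, 0 < g i := by
    push Not at hT
    obtain ⟨g, h1, h2, h3⟩ := hT
    have h1' : ∀ i, x i = 0 → g i = 0 := fun i hi => h1 i (by simp [hi])
    obtain ⟨i, hi⟩ := Function.ne_iff.1 h3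
    rcases lt_or_gt_of_ne hi with h | h
    · refine ⟨-g, fun i hi => by simp [h1' i hi], ?_, i, by simpa using h⟩
      have := (combL a).map_neg g
      change comb a (-g) = - comb a g at this
      rw [this, h2, neg_zero]
    · exact ⟨g, h1', h2, i, h⟩
  obtain ⟨g, h1, h2, i0, hi0⟩ := hg
  obtain ⟨p, hp, hmin⟩ := Finset.exists_min_image (Finset.univ.filter (fun i => 0 < g i))
    (fun i => x i / g i) ⟨i0, by simpa using hi0⟩
  have hp : 0 < g p := by simpa using hp
  set t := x p / g p with ht
  have ht0 : 0 ≤ t := div_nonneg (hx p) hp.le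
  let y := x - t • g
  have hyi : ∀ i, y i = x i - t * g i := fun i => rfl
  have hy0 : ∀ i, 0 ≤ y i := by
    intro i
    rw [hyi]
    rcases le_or_gt (g i) 0 with h | h
    · have := mul_nonpos_of_nonneg_of_nonpos ht0 h
      linarith [hx i]
    · have := hmin i (by simpa using h)
      have := (le_div_iff₀ h).1 this
      linarith
  have hyx : ∀ i, x i = 0 → y i = 0 := by
    intro i hi
    rw [hyi, hi, h1 i hi]; simp
  have hyp : y p = 0 := by
    rw [hyi, ht]; field_simp; simp
  have hxp : x p ≠ 0 := fun h => by
    have := h1 p h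
    linarith
  have hc : comb a y = comb a x := by
    have e : comb a y = comb a x - t • comb a g := by
      have := (combL a).map_sub x (t • g)
      rw [(combL a).map_smul] at this
      exact this
    rw [e, h2]; simp
  have hlt : (Finset.univ.filter (fun i => y i ≠ 0)).card < k := by
    rw [← hk]
    apply Finset.card_lt_card
    rw [Finset.ssubset_iff_of_subset]
    · exact ⟨p, by simpa using hxp, by simpa using hyp⟩
    · intro i hi
      simp only [Finset.mem_filter, Finset.mem_univ, true_and] at hi ⊢
      exact fun h => hi (hyx i h)
  obtain ⟨z, z0, z1, z2, z3⟩ := ih _ hlt y hy0 rfl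
  refine ⟨z, z0, fun i hi => ?_, z2.trans hc, z3⟩
  have := z1 i hi
  exact lt_of_le_of_ne (hx i) fun h => by
    have := hyx i h.symm
    linarith

theorem inner_comb {m n : ℕ} (a : Fin n → EuclideanSpace ℝ (Fin m))
    (y : EuclideanSpace ℝ (Fin m)) (u : Fin n → ℝ) :
    ⟪y, comb a u⟫ = ∑ i, u i * ⟪y, a i⟫ := by
  simp [comb, inner_sum, inner_smul_right]

theorem lam_le {m n : ℕ} (a : Fin n → EuclideanSpace ℝ (Fin m)) (x : Fin n → ℝ)
    (hy : comb a x ≠ 0) (lam M : ℝ)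
    (hM : ∀ l j : Fin n, 0 < x l → ⟪comb a x, a l - a j⟫ / ‖comb a x‖ ≤ M)
    (u v : Fin n → ℝ) (hu : u ∈ stdSimplex ℝ (Fin n)) (hv : v ∈ stdSimplex ℝ (Fin n))
    (hux : ∀ i, 0 < u i → 0 < x i)
    (h : comb a u - comb a v = (lam / ‖comb a x‖) • comb a x) : lam ≤ M := by
  set y := comb a x with hyd
  have hn : 0 < ‖y‖ := norm_pos_iff.2 hy
  have e : ⟪y, comb a u - comb a v⟫ = lam * ‖y‖ := by
    rw [h, inner_smul_right, real_inner_self_eq_norm_sq]; field_simp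
  have e2 : ⟪y, comb a u - comb a v⟫ = ∑ i, ∑ j, u i * v j * ⟪y, a i - a j⟫ := by
    rw [inner_sub_right, inner_comb, inner_comb]
    simp only [inner_sub_right, mul_sub, Finset.sum_sub_distrib]
    congr 1
    · refine Finset.sum_congr rfl fun i _ => ?_
      rw [← Finset.sum_mul, ← Finset.mul_sum, hv.2, mul_one]
    · rw [Finset.sum_comm]
      refine Finset.sum_congr rfl fun i _ => ?_
      rw [← Finset.sum_mul, ← Finset.sum_mul, hu.2, one_mul]
  have e3 : ∑ i, ∑ j, u i * v j * ⟪y, a i - a j⟫ ≤ ∑ i, ∑ j, u i * v j * (M * ‖y‖) := by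
    refine Finset.sum_le_sum fun i _ => Finset.sum_le_sum fun j _ => ?_
    rcases (hu.1 i).eq_or_lt with h | h
    · rw [← h]; simp
    · have := (div_le_iff₀ hn).1 (hM i j (hux i h))
      exact mul_le_mul_of_nonneg_left this (mul_nonneg h.le (hv.1 j))
  have e4 : ∑ i, ∑ j, u i * v j * (M * ‖y‖) = M * ‖y‖ := by
    simp only [← Finset.sum_mul, ← Finset.mul_sum, hv.2, hu.2, one_mul, mul_one]
  rw [← e2, e, e4] at e3
  exact le_of_mul_le_mul_right e3 hn

theorem set_fin {m n : ℕ} (a : Fin n → EuclideanSpace ℝ (Fin m)) (x : Fin n → ℝ) :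
    BddAbove {s : ℝ | ∃ l j : Fin n, 0 < x l ∧
      s = ⟪comb a x, a l - a j⟫ / ‖comb a x‖} := by
  apply Set.Finite.bddAbove
  refine (Set.finite_range (fun p : Fin n × Fin n =>
    ⟪comb a x, a p.1 - a p.2⟫ / ‖comb a x‖)).subset ?_
  rintro s ⟨l, j, _, rfl⟩
  exact ⟨(l, j), rfl⟩

theorem phi_lower {m n : ℕ} (a : Fin n → EuclideanSpace ℝ (Fin m))
    (h0 : (0 : EuclideanSpace ℝ (Fin m)) ∈ convexHull ℝ (Set.range a)) :
    ∃ c : ℝ, 0 < c ∧ ∀ x : Fin n → ℝ, (∀ i, 0 ≤ x i) → comb a x ≠ 0 →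
    ∃ lam, c ≤ lam ∧ 0 < lam ∧ ∃ u ∈ stdSimplex ℝ (Fin n), ∃ v ∈ stdSimplex ℝ (Fin n),
    (∀ i, 0 < u i → 0 < x i) ∧
    comb a u - comb a v = (lam / ‖comb a x‖) • comb a x := by
  obtain ⟨v, hv, hv0⟩ : ∃ v ∈ stdSimplex ℝ (Fin n), comb a v = 0 := by
    rw [convexHull_range_eq_exists_affineCombination] at h0
    obtain ⟨s, w, hw0, hw1, hw⟩ := h0
    rw [Finset.affineCombination_eq_linear_combination _ _ _ hw1] at hw
    refine ⟨fun i => if i ∈ s then w i else 0, ⟨fun i => ?_, ?_⟩, ?_⟩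
    · dsimp only
      split_ifs with h
      · exact hw0 i h
      · exact le_rfl
    · simpa using hw1
    · simpa [comb] using hw
  obtain ⟨C, hC, hb⟩ := bound_all a
  refine ⟨1 / C, by positivity, fun x hx hy => ?_⟩
  obtain ⟨z, z0, z1, z2, z3⟩ := cara a _ x hx rfl
  have hn : 0 < ‖comb a x‖ := norm_pos_iff.2 hy
  have hs := hb _ z3 z (by simp)
  rw [z2] at hs
  have hpos : 0 < ∑ i, z i := by
    refine lt_of_le_of_ne (Finset.sum_nonneg fun i _ => z0 i) fun h => hy ?_
    have := (Finset.sum_eq_zero_iff_of_nonneg (fun i _ => z0 i)).1 h.symm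
    rw [← z2]
    exact Finset.sum_eq_zero fun i hi => by rw [this i hi, zero_smul]
  refine ⟨‖comb a x‖ / ∑ i, z i, ?_, by positivity, (∑ i, z i)⁻¹ • z, ⟨fun i => ?_, ?_⟩, v, hv,
    fun i hi => z1 i ?_, ?_⟩
  · rw [div_le_div_iff₀ hC hpos]; linarith
  · exact mul_nonneg (inv_nonneg.2 hpos.le) (z0 i)
  · simp only [Pi.smul_apply, smul_eq_mul]
    rw [← Finset.mul_sum, inv_mul_cancel₀ hpos.ne']
  · exact pos_of_mul_pos_right hi (inv_nonneg.2 hpos.le)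
  · have := (combL a).map_smul (∑ i, z i)⁻¹ z
    change comb a _ = _ • comb a z at this
    rw [this, hv0, sub_zero, z2]
    congr 1
    field_simp

/-- for a nonzero matrix `A` with `0 ∈ conv(A)`, `w(A) ≥ φ(A) > 0`. -/
theorem stmt19 (m n : ℕ) (a : Fin n → EuclideanSpace ℝ (Fin m)) (hA : ∃ i, a i ≠ 0)
    (h0 : (0 : EuclideanSpace ℝ (Fin m)) ∈ convexHull ℝ (Set.range a)) :
    phi a ≤ relWidth a ∧ 0 < phi a := by
  obtain ⟨c, hc, H⟩ := phi_lower a h0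
  obtain ⟨i0, hi0⟩ := hA
  have hx0 : (∀ i, 0 ≤ (Pi.single i0 1 : Fin n → ℝ) i) ∧
      comb a (Pi.single i0 1 : Fin n → ℝ) ≠ 0 := by
    refine ⟨fun i => ?_, ?_⟩
    · by_cases h : i = i0
      · subst h; simp
      · simp [h]
    · simpa [comb, Pi.single_apply] using hi0
  have hle : ∀ x : Fin n → ℝ, comb a x ≠ 0 → ∀ lam ∈ {lam : ℝ | 0 < lam ∧
      ∃ u ∈ stdSimplex ℝ (Fin n), ∃ v ∈ stdSimplex ℝ (Fin n),
      (∀ i, 0 < u i → 0 < x i) ∧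
      comb a u - comb a v = (lam / ‖comb a x‖) • comb a x},
      lam ≤ sSup {s : ℝ | ∃ l j : Fin n, 0 < x l ∧
      s = ⟪comb a x, a l - a j⟫ / ‖comb a x‖} := by
    rintro x hy lam ⟨_, u, hu, v, hv, hux, h⟩
    exact lam_le a x hy lam _ (fun l j hl => le_csSup (set_fin a x) ⟨l, j, hl, rfl⟩) u v hu hv hux h
  have hphi : ∀ x : Fin n → ℝ, (∀ i, 0 ≤ x i) → comb a x ≠ 0 → c ≤ phiAt a x := by
    intro x hx hy
    obtain ⟨lam, h1, h2⟩ := H x hx hy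
    exact h1.trans (le_csSup ⟨_, hle x hy⟩ h2)
  constructor
  · refine le_csInf ⟨_, _, hx0.1, hx0.2, rfl⟩ ?_
    rintro t ⟨x, hx, hy, rfl⟩
    have h1 : phi a ≤ phiAt a x := by
      refine csInf_le ⟨c, ?_⟩ ⟨x, hx, hy, rfl⟩
      rintro t ⟨x, hx, hy, rfl⟩
      exact hphi x hx hy
    refine h1.trans (csSup_le ?_ (hle x hy))
    obtain ⟨lam, h1, h2⟩ := H x hx hy
    exact ⟨lam, h2⟩
  · refine hc.trans_le (le_csInf ⟨_, _, hx0.1, hx0.2, rfl⟩ ?_)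
    rintro t ⟨x, hx, hy, rfl⟩
    exact hphi x hx hy
end
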